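/- arXiv:1010.3415 — 2 statements merged into one kernel-verified Lean document; each statement's English description precedes it below -/
import Mathlib

section
/- Let g ≥ 5 be an odd integer. Every subcubic graph G whose odd girth is at least g has fractional chromatic number at most 8/(3 − 6/(g+1)). -/
/-!
A bridge can be put back after colouring: permute the palette on one side of it. In a bridgeless
subcubic graph `G`, Tutte's theorem yields a matching covering all vertices of degree three, and the
remaining edges form a graph `F` of maximum degree two, which lies along the cycles of a permutation
`σ`. Delete a set `D` of vertices spaced along these cycles so that every component of `F` keeps at
most `2k` vertices, fewer than the odd girth `2k + 1`; then `G` is bipartite on each component.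
Choose independently a random side of each component, together with a random bit deciding which end
of a conflicting matching edge to drop: the result is independent and contains every surviving
vertex with probability at least `3 / 8`. A fixed vertex lies in at most the fraction `1 / (k + 1)`
of the translates of `D` by powers of `σ`, so averaging over these translates gives the bound
`(k + 1) / k * (8 / 3)`, which is `8 / (3 - 6 / (g + 1))` for `g = 2k + 1`.
-/

open Finset SimpleGraph

section FractionalColoring

variable {V Ω : Type*} {G : SimpleGraph V} {r : ℝ}

/-- Adjacent vertices receive disjoint sets of colours. -/
def IsSetColoring (G : SimpleGraph V) (f : V → Finset Ω) : Prop :=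
  ∀ ⦃u v⦄, G.Adj u v → Disjoint (f u) (f v)

/-- `G` has fractional chromatic number at most `r`, encoded by a colouring that gives every vertex
at least the fraction `1 / r` of a finite nonempty palette. -/
def FractionallyColorable (G : SimpleGraph V) (r : ℝ) : Prop :=
  ∃ n : ℕ, 0 < n ∧ ∃ f : V → Finset (Fin n), IsSetColoring G f ∧ ∀ v, (n : ℝ) ≤ r * #(f v)

theorem IsSetColoring.anti {f g : V → Finset Ω} (hf : IsSetColoring G f) (hgf : ∀ v, g v ⊆ f v) :
    IsSetColoring G g :=
  fun u v huv => disjoint_of_subset_left (hgf u) (disjoint_of_subset_right (hgf v) (hf huv))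

theorem IsSetColoring.fractionallyColorable [Fintype Ω] [Nonempty Ω] {f : V → Finset Ω}
    (hf : IsSetColoring G f) (hcard : ∀ v, (Fintype.card Ω : ℝ) ≤ r * #(f v)) :
    FractionallyColorable G r :=
  ⟨Fintype.card Ω, Fintype.card_pos, fun v => (f v).map (Fintype.equivFin Ω).toEmbedding,
    fun _ _ huv => (disjoint_map _).2 (hf huv), fun v => by simpa only [card_map] using hcard v⟩

theorem FractionallyColorable.exists_weights [Fintype V] [DecidableEq V] (hr : 0 ≤ r)
    (h : FractionallyColorable G r) :
    ∃ w : Finset V → ℝ, (∀ I, 0 ≤ w I) ∧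
      (∀ I : Finset V, w I ≠ 0 → ∀ a ∈ I, ∀ b ∈ I, ¬ G.Adj a b) ∧
      (∀ v : V, 1 ≤ ∑ I : Finset V with v ∈ I, w I) ∧ ∑ I, w I = r := by
  obtain ⟨n, hn, f, hf, hcard⟩ := h
  let colorClass (x : Fin n) : Finset V := {v | x ∈ f v}
  have mem_colorClass (x : Fin n) (v : V) : v ∈ colorClass x ↔ x ∈ f v := by simp [colorClass]
  have sum_weights (s : Finset (Finset V)) :
      ∑ I ∈ s, r / n * #{x | colorClass x = I} = r / n * #{x | colorClass x ∈ s} := by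
    rw [← mul_sum, ← Nat.cast_sum, sum_card_fiberwise_eq_card_filter]
  refine ⟨fun I => r / n * #{x | colorClass x = I}, fun I => by positivity, ?_, fun v => ?_, ?_⟩
  · intro I hI a ha b hb hab
    have hne : #{x | colorClass x = I} ≠ 0 := fun h0 => hI (by simp [h0])
    obtain ⟨x, hx⟩ := card_ne_zero.1 hne
    obtain rfl := (mem_filter.1 hx).2
    exact disjoint_left.1 (hf hab) ((mem_colorClass x a).1 ha) ((mem_colorClass x b).1 hb)
  · rw [sum_weights, div_mul_eq_mul_div, one_le_div (by exact_mod_cast hn)]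
    simpa only [mem_filter_univ, mem_colorClass, filter_univ_mem] using hcard v
  · rw [sum_weights]
    simp [hn.ne']

theorem card_filter_apply_mem_mul {ι : Type*} [Fintype ι] [DecidableEq ι] {α : ι → Type*}
    [∀ i, Fintype (α i)] [∀ i, DecidableEq (α i)] (i : ι) (A : Finset (α i)) :
    #{x : ∀ i, α i | x i ∈ A} * Fintype.card (α i) = #A * Fintype.card (∀ i, α i) := by
  have hfiber (a : α i) : #{x : ∀ i, α i | x i = a} = ∏ j ∈ univ.erase i, Fintype.card (α j) := by
    simpa using Fintype.card_filter_piFinset_eq_of_mem (fun i => (univ : Finset (α i))) i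
      (mem_univ a)
  rw [← sum_card_fiberwise_eq_card_filter, sum_congr rfl fun a _ => hfiber a, sum_const,
    smul_eq_mul, Fintype.card_pi, ← prod_erase_mul univ _ (mem_univ i), mul_assoc]

theorem FractionallyColorable.exists_of_induce {s : Set V}
    (h : FractionallyColorable (G.induce s) r) :
    ∃ n : ℕ, 0 < n ∧ ∃ f : V → Finset (Fin n), IsSetColoring G f ∧
      ∀ v ∈ s, (n : ℝ) ≤ r * #(f v) := by
  classical
  obtain ⟨n, hn, f, hf, hcard⟩ := h
  refine ⟨n, hn, fun v => if hv : v ∈ s then f ⟨v, hv⟩ else ∅, fun u v huv => ?_, fun v hv => ?_⟩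
  · by_cases hu : u ∈ s <;> by_cases hv : v ∈ s <;> simp only [hu, hv, dite_true, dite_false,
      disjoint_empty_left, disjoint_empty_right]
    exact hf (induce_adj.2 huv)
  · simpa only [hv, dite_true] using hcard ⟨v, hv⟩

theorem FractionallyColorable.average {ι : Type*} [Fintype ι] [Nonempty ι] {t : ℝ} (ht0 : 0 ≤ t)
    {s : ι → Set V} [∀ v, DecidablePred (v ∈ s ·)]
    (hs : ∀ j, FractionallyColorable (G.induce (s j)) r)
    (ht : ∀ v, (Fintype.card ι : ℝ) ≤ t * #{j | v ∈ s j}) : FractionallyColorable G (t * r) := by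
  classical
  choose n hn f hf hcard using fun j => (hs j).exists_of_induce
  let Ω := ∀ j, Fin (n j)
  have : Nonempty ((_ : ι) × Ω) := ⟨⟨Classical.arbitrary ι, fun j => ⟨0, hn j⟩⟩⟩
  -- A colour is an index `j` with one colour from each of the palettes; only the `j`-th is used.
  let g (v : V) : Finset ((_ : ι) × Ω) :=
    Finset.sigma {j | v ∈ s j} fun j => {x : Ω | x j ∈ f j v}
  have hg : IsSetColoring G g := fun u v huv => disjoint_left.2 fun ⟨j, x⟩ hu hv => by
    simp only [g, mem_sigma, mem_filter_univ] at hu hv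
    exact disjoint_left.1 (hf j huv) hu.2 hv.2
  have hfiber (v : V) (j : ι) (hj : v ∈ s j) :
      (Fintype.card Ω : ℝ) ≤ r * #{x : Ω | x j ∈ f j v} := by
    have hmul : (#{x : Ω | x j ∈ f j v} : ℝ) * n j = #(f j v) * Fintype.card Ω := by
      have h := card_filter_apply_mem_mul (α := fun j => Fin (n j)) j (f j v)
      rw [Fintype.card_fin] at h
      exact_mod_cast h
    refine le_of_mul_le_mul_right ?_ (Nat.cast_pos.2 (hn j) : (0 : ℝ) < n j)
    rw [mul_assoc, hmul, ← mul_assoc, mul_comm]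
    exact mul_le_mul_of_nonneg_right (hcard j v hj) (Nat.cast_nonneg _)
  refine hg.fractionallyColorable fun v => ?_
  calc (Fintype.card ((_ : ι) × Ω) : ℝ)
      = Fintype.card ι * Fintype.card Ω := by simp
    _ ≤ t * #{j | v ∈ s j} * Fintype.card Ω := by gcongr; exact ht v
    _ = t * ∑ j with v ∈ s j, (Fintype.card Ω : ℝ) := by rw [sum_const, nsmul_eq_mul, mul_assoc]
    _ ≤ t * ∑ j with v ∈ s j, r * #{x : Ω | x j ∈ f j v} := by
      gcongr with j hj
      exact hfiber v j (mem_filter.1 hj).2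
    _ = t * r * #(g v) := by rw [card_sigma, ← mul_sum, ← mul_assoc, Nat.cast_sum]

theorem FractionallyColorable.exists_two_mul_card_le (hr : 2 ≤ r) (h : FractionallyColorable G r) :
    ∃ n : ℕ, 0 < n ∧ ∃ f : V → Finset (Fin n), IsSetColoring G f ∧
      (∀ v, (n : ℝ) ≤ r * #(f v)) ∧ ∀ v, 2 * #(f v) ≤ n := by
  obtain ⟨n, hn, f, hf, hcard⟩ := h
  -- Doubling the palette makes half of it a whole number of colours.
  let f₂ (v : V) : Finset (Fin n × Fin 2) := f v ×ˢ univ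
  have hf₂ : IsSetColoring G f₂ := fun u v huv => disjoint_product.2 (.inl (hf huv))
  have hsub (v : V) : ∃ t ⊆ f₂ v, #t = min (#(f₂ v)) n :=
    exists_subset_card_eq (min_le_left _ _)
  choose t ht htcard using hsub
  have hcard_t (v : V) : #(t v) = min (2 * #(f v)) n := by
    rw [htcard, card_product, card_univ, Fintype.card_fin, mul_comm]
  refine ⟨n * 2, by lia, fun v => (t v).map finProdFinEquiv.toEmbedding,
    fun u v huv => (disjoint_map _).2 (hf₂.anti ht huv), fun v => ?_, fun v => ?_⟩ <;>
    rw [card_map, hcard_t]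
  · push_cast
    rcases min_cases (2 * (#(f v) : ℝ)) n with ⟨h, -⟩ | ⟨h, -⟩ <;> rw [h]
    · linarith [hcard v]
    · nlinarith [(Nat.cast_nonneg n : (0 : ℝ) ≤ n)]
  · lia

theorem FractionallyColorable.of_deleteEdges_of_isBridge (hr : 2 ≤ r) {u v : V}
    (huv : G.IsBridge s(u, v)) (h : FractionallyColorable (G.deleteEdges {s(u, v)}) r) :
    FractionallyColorable G r := by
  classical
  obtain ⟨n, hn, f, hf, hcard, hhalf⟩ := h.exists_two_mul_card_le hr
  obtain ⟨t, ht, htu⟩ := exists_subset_card_eq (s := (f v)ᶜ) (n := #(f u)) (by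
    have hu := hhalf u
    have hv := hhalf v
    rw [card_compl, Fintype.card_fin]
    lia)
  obtain ⟨π, rfl⟩ := Equiv.Perm.exists_map_finset_eq (f u) t htu.symm
  let K : Set V := {x | (G.deleteEdges {s(u, v)}).Reachable u x}
  have huK : u ∈ K := Reachable.refl u
  have hvK : v ∉ K := isBridge_iff.1 huv
  have hmem {x y : V} (hxy : (G.deleteEdges {s(u, v)}).Adj x y) : x ∈ K ↔ y ∈ K :=
    ⟨fun hx => hx.trans hxy.reachable, fun hy => hy.trans hxy.symm.reachable⟩
  have hdisj : Disjoint ((f u).map π.toEmbedding) (f v) :=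
    disjoint_of_subset_left ht disjoint_compl_left
  refine ⟨n, hn, fun x => if x ∈ K then (f x).map π.toEmbedding else f x, fun x y hxy => ?_, ?_⟩
  · by_cases hxy' : s(x, y) = s(u, v)
    · obtain ⟨rfl, rfl⟩ | ⟨rfl, rfl⟩ := Sym2.eq_iff.1 hxy'
      · simpa only [huK, hvK, if_true, if_false] using hdisj
      · simpa only [huK, hvK, if_true, if_false] using hdisj.symm
    · have hadj : (G.deleteEdges {s(u, v)}).Adj x y := deleteEdges_adj.2 ⟨hxy, hxy'⟩
      simp only [hmem hadj]
      split_ifs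
      · exact (disjoint_map _).2 (hf hadj)
      · exact hf hadj
  · intro x
    simpa only [apply_ite card, card_map, ite_self] using hcard x

end FractionalColoring

section OddCycles

variable {V : Type*} {G F : SimpleGraph V}

/-- The odd girth of `G` is at least `g`; this holds for every `g` when `G` is bipartite. -/
def OddGirthAtLeast (G : SimpleGraph V) (g : ℕ) : Prop :=
  ∀ ⦃v⦄ (w : G.Walk v v), w.IsCycle → Odd w.length → g ≤ w.length

/-- The subgraph of `G` of the edges that join two vertices of the same connected component
of `F`. -/
def intraComponent (G F : SimpleGraph V) : SimpleGraph V where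
  Adj u v := G.Adj u v ∧ F.Reachable u v
  symm := ⟨fun _ _ h => ⟨h.1.symm, h.2.symm⟩⟩
  loopless := ⟨fun _ h => h.1.ne rfl⟩

theorem OddGirthAtLeast.comap {W : Type*} {H : SimpleGraph W} {g : ℕ} (h : OddGirthAtLeast G g)
    (φ : H →g G) (hφ : Function.Injective φ) : OddGirthAtLeast H g := fun v w hw hodd => by
  simpa only [Walk.length_map] using h (w.map φ) (hw.map hφ) (by rwa [Walk.length_map])

theorem exists_isPath_even_length_iff (hG : ∀ ⦃v⦄ (w : G.Walk v v), w.IsCycle → Even w.length)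
    {u v : V} (p : G.Walk u v) : ∃ q : G.Walk u v, q.IsPath ∧ (Even q.length ↔ Even p.length) := by
  classical
  induction p with
  | nil => exact ⟨.nil, .nil, .rfl⟩
  | @cons u w v h p ih =>
    obtain ⟨q, hq, hpar⟩ := ih
    by_cases hu : u ∈ q.support
    · have hlen : (q.takeUntil u hu).length + (q.dropUntil u hu).length = q.length := by
        rw [← Walk.length_append, Walk.take_spec]
      have hodd : ¬ Even (q.takeUntil u hu).length := fun heven => by
        refine Nat.not_even_iff_odd.2 heven.add_one (hG (.cons h (q.takeUntil u hu)) ?_)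
        refine (Walk.cons_isCycle_iff _ h).2 ⟨hq.takeUntil hu, fun hmem => ?_⟩
        have hone := (hq.takeUntil hu).length_eq_one_of_mem_edges (Sym2.eq_swap ▸ hmem)
        exact absurd (hone ▸ heven) (by decide)
      refine ⟨q.dropUntil u hu, hq.dropUntil hu, ?_⟩
      rw [Walk.length_cons, Nat.even_add_one, ← hpar, ← hlen, Nat.even_add]
      tauto
    · refine ⟨.cons h q, hq.cons hu, ?_⟩
      rw [Walk.length_cons, Walk.length_cons, Nat.even_add_one, Nat.even_add_one, hpar]

theorem colorable_two_of_forall_isCycle_even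
    (hG : ∀ ⦃v⦄ (w : G.Walk v v), w.IsCycle → Even w.length) : G.Colorable 2 := by
  refine two_colorable_iff_forall_loop_even.2 fun u w => ?_
  obtain ⟨q, hq, hpar⟩ := exists_isPath_even_length_iff hG w
  rw [(Walk.isPath_iff_nil.1 hq).eq_nil] at hpar
  exact hpar.1 (by simp)

theorem reachable_of_intraComponent_reachable {u v : V} (h : (intraComponent G F).Reachable u v) :
    F.Reachable u v := by
  obtain ⟨p⟩ := h
  induction p with
  | nil => exact .rfl
  | cons hadj _ ih => exact hadj.2.trans ih

theorem card_support_of_isCycle [DecidableEq V] {v : V} {w : G.Walk v v} (hw : w.IsCycle) :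
    #w.support.toFinset = w.length := by
  have htail : w.support.toFinset = w.support.tail.toFinset := by
    rw [← Walk.cons_tail_support, List.toFinset_cons, List.tail_cons, insert_eq_of_mem]
    exact List.mem_toFinset.2 (Walk.end_mem_tail_support hw.not_nil)
  rw [htail, List.toFinset_card_of_nodup hw.support_nodup, List.length_tail, Walk.length_support,
    Nat.add_sub_cancel]

theorem intraComponent_colorable_two [Finite V] {g : ℕ} (hG : OddGirthAtLeast G g)
    (hF : ∀ C : F.ConnectedComponent, C.supp.ncard < g) : (intraComponent G F).Colorable 2 := by
  classical
  refine colorable_two_of_forall_isCycle_even fun v w hw => ?_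
  by_contra hodd
  let ι : intraComponent G F →g G := .ofLE fun _ _ h => h.1
  have hlen := (hG.comap ι Function.injective_id) w hw (Nat.not_even_iff_odd.1 hodd)
  have hsub : (w.support.toFinset : Set V) ⊆ (F.connectedComponentMk v).supp := fun x hx =>
    ConnectedComponent.sound (reachable_of_intraComponent_reachable
      (w.takeUntil x (by simpa using hx)).reachable).symm
  have hcard := Set.ncard_le_ncard hsub
  rw [Set.ncard_coe_finset, card_support_of_isCycle hw] at hcard
  exact absurd (hF (F.connectedComponentMk v)) (by lia)

end OddCycles

theorem card_mul_card_le_of_forall_perm {Ω S : Type*} [Fintype Ω] [Fintype S] (P : Ω → Prop)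
    [DecidablePred P] (φ : S → Equiv.Perm Ω) {r : ℕ} (h : ∀ ω, r ≤ #{s | P (φ s ω)}) :
    r * Fintype.card Ω ≤ Fintype.card S * #{ω | P ω} := by
  have hperm (s : S) : #{ω | P (φ s ω)} = #{ω | P ω} :=
    card_equiv (φ s) fun ω => by simp only [mem_filter_univ]
  calc r * Fintype.card Ω = ∑ _ω : Ω, r := by rw [sum_const, card_univ, smul_eq_mul, mul_comm]
    _ ≤ ∑ ω, #{s | P (φ s ω)} := sum_le_sum fun ω _ => h ω
    _ = ∑ s, #{ω | P (φ s ω)} := sum_card_bipartiteAbove_eq_sum_card_bipartiteBelow _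
    _ = Fintype.card S * #{ω | P ω} := by
      rw [sum_congr rfl fun s _ => hperm s, sum_const, card_univ, smul_eq_mul]

section RandomSelection

variable {Λ : Type*} [Fintype Λ] [DecidableEq Λ]

theorem card_le_two_mul_card_filter_apply_eq (i : Λ) (a : Fin 2) :
    Fintype.card ((Λ → Fin 2) × Fin 2) ≤ 2 * #{ω : (Λ → Fin 2) × Fin 2 | ω.1 i = a} := by
  have hshift (x : Fin 2) : 1 ≤ #{s : Fin 2 | s + x = a} := by
    revert a x; decide
  simpa using card_mul_card_le_of_forall_perm (S := Fin 2) (r := 1)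
    (fun ω : (Λ → Fin 2) × Fin 2 => ω.1 i = a) (fun s => Equiv.addLeft (Pi.single i s, 0))
    fun ω => by simpa using hshift (ω.1 i)

theorem three_mul_card_le_eight_mul_card_filter {i j : Λ} (hij : i ≠ j) (a b : Fin 2) (q : Prop)
    [Decidable q] :
    3 * Fintype.card ((Λ → Fin 2) × Fin 2) ≤
      8 * #{ω : (Λ → Fin 2) × Fin 2 | ω.1 i = a ∧ (ω.1 j = b → (ω.2 = 0 ↔ q))} := by
  have hshift (x y z : Fin 2) :
      3 ≤ #{s : Fin 2 × Fin 2 × Fin 2 |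
        s.1 + x = a ∧ (s.2.1 + y = b → (s.2.2 + z = 0 ↔ q))} := by
    by_cases hq : q <;> simp only [hq] <;> revert a b x y z <;> decide
  simpa using card_mul_card_le_of_forall_perm (S := Fin 2 × Fin 2 × Fin 2)
    (fun ω : (Λ → Fin 2) × Fin 2 => ω.1 i = a ∧ (ω.1 j = b → (ω.2 = 0 ↔ q)))
    (fun s => Equiv.addLeft (Pi.single i s.1 + Pi.single j s.2.1, s.2.2)) fun ω => by
      simpa [hij, hij.symm] using hshift (ω.1 i) (ω.1 j) ω.2

end RandomSelection

section Selection

variable {V : Type*} {G F : SimpleGraph V}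

open scoped Classical in
/-- The outcomes `ω` that keep `v`, given a 2-colouring `c` of each component of `F`. An outcome
picks one of the two colours for each component, which selects the vertices of that colour, and a
bit that breaks ties: when both ends of an edge of `G` outside `F` are selected, the bit decides
whether the smaller or the larger end, in some fixed linear order, is kept. -/
noncomputable def keptOutcomes [Fintype F.ConnectedComponent] (G : SimpleGraph V) (c : V → Fin 2)
    (v : V) : Finset ((F.ConnectedComponent → Fin 2) × Fin 2) :=
  {ω | ω.1 (F.connectedComponentMk v) = c v ∧ ∀ u, (G \ F).Adj v u →
    ω.1 (F.connectedComponentMk u) = c u → (ω.2 = 0 ↔ WellOrderingRel v u)}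

theorem mem_keptOutcomes [Fintype F.ConnectedComponent] {c : V → Fin 2} {v : V}
    {ω : (F.ConnectedComponent → Fin 2) × Fin 2} :
    ω ∈ keptOutcomes G c v ↔ ω.1 (F.connectedComponentMk v) = c v ∧ ∀ u, (G \ F).Adj v u →
      ω.1 (F.connectedComponentMk u) = c u → (ω.2 = 0 ↔ WellOrderingRel v u) := by
  classical
  simp [keptOutcomes]

theorem isSetColoring_keptOutcomes [Fintype F.ConnectedComponent]
    (c : (intraComponent G F).Coloring (Fin 2)) :
    IsSetColoring G (keptOutcomes (F := F) G c) := by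
  refine fun u v huv => disjoint_left.2 fun ω hu hv => ?_
  obtain ⟨hu, hu'⟩ := mem_keptOutcomes.1 hu
  obtain ⟨hv, hv'⟩ := mem_keptOutcomes.1 hv
  by_cases hreach : F.Reachable u v
  · exact c.valid ⟨huv, hreach⟩ (by rw [← hu, ← hv, ConnectedComponent.sound hreach])
  · have hadj : (G \ F).Adj u v := ⟨huv, fun h => hreach h.reachable⟩
    have htie := (hu' v hadj hv).symm.trans (hv' u hadj.symm hu)
    rcases trichotomous_of WellOrderingRel u v with h | h | h
    · exact asymm h (htie.1 h)
    · exact huv.ne h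
    · exact asymm h (htie.2 h)

theorem three_mul_card_le_eight_mul_card_keptOutcomes [Fintype F.ConnectedComponent]
    [DecidableEq F.ConnectedComponent]
    (hM : ∀ v, ((G \ F).neighborSet v).Subsingleton) (c : (intraComponent G F).Coloring (Fin 2))
    (v : V) :
    3 * Fintype.card ((F.ConnectedComponent → Fin 2) × Fin 2) ≤
      8 * #(keptOutcomes (F := F) G c v) := by
  classical
  by_cases hu : ∃ u, (G \ F).Adj v u ∧ ¬ F.Reachable v u
  · obtain ⟨u, hvu, hnot⟩ := hu
    refine (three_mul_card_le_eight_mul_card_filter (mt ConnectedComponent.exact hnot) (c v) (c u)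
      (WellOrderingRel v u)).trans (Nat.mul_le_mul_left 8 (card_le_card fun ω hω => ?_))
    obtain ⟨hv, htie⟩ := (mem_filter_univ _).1 hω
    refine mem_keptOutcomes.2 ⟨hv, fun u' hu' => ?_⟩
    obtain rfl : u' = u := hM v hu' hvu
    exact htie
  · -- A selected vertex is kept: it shares its component with its neighbour outside `F`, if any.
    push Not at hu
    have hhalf := card_le_two_mul_card_filter_apply_eq (F.connectedComponentMk v) (c v)
    suffices hsub : ({ω | ω.1 (F.connectedComponentMk v) = c v} :
        Finset ((F.ConnectedComponent → Fin 2) × Fin 2)) ⊆ keptOutcomes G c v by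
      have := card_le_card hsub
      lia
    intro ω hω
    have hv := (mem_filter.1 hω).2
    refine mem_keptOutcomes.2 ⟨hv, fun u hvu hsel => absurd ?_ (c.valid ⟨hvu.1, hu u hvu⟩)⟩
    rw [← hv, ← hsel, ConnectedComponent.sound (hu u hvu)]

theorem fractionallyColorable_eight_thirds [Finite V]
    (hM : ∀ v, ((G \ F).neighborSet v).Subsingleton) (hF : (intraComponent G F).Colorable 2) :
    FractionallyColorable G (8 / 3) := by
  classical
  have := Fintype.ofFinite F.ConnectedComponent
  obtain ⟨c⟩ := hF
  refine (isSetColoring_keptOutcomes c).fractionallyColorable fun v => ?_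
  have hcard : (3 * Fintype.card ((F.ConnectedComponent → Fin 2) × Fin 2) : ℝ) ≤
      8 * #(keptOutcomes (F := F) G c v) := by
    exact_mod_cast three_mul_card_le_eight_mul_card_keptOutcomes hM c v
  linarith

end Selection

theorem even_card_of_involution {α : Type*} {s : Finset α} {f : α → α} (hs : ∀ a ∈ s, f a ∈ s)
    (hf : ∀ a ∈ s, f (f a) = a) (hne : ∀ a ∈ s, f a ≠ a) : Even #s := by
  have hsum : ∑ _a ∈ s, (1 : ZMod 2) = 0 :=
    sum_involution (fun a _ => f a) (fun _ _ => by decide) (fun a ha _ => hne a ha) hs hf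
  simpa [ZMod.natCast_eq_zero_iff_even] using hsum

section Orientation

theorem colorable_two_of_involutive {W : Type*} {Q : SimpleGraph W} {s : W → W}
    (hs : Function.Involutive s) (hne : ∀ x, s x ≠ x)
    (hQ : ∀ x, (Q.neighborSet x \ {s x}).Subsingleton) : Q.Colorable 2 := by
  classical
  refine colorable_two_of_forall_isCycle_even fun v w hw => ?_
  have hmem : ∀ x ∈ w.support.toFinset, s x ∈ w.support.toFinset := fun x hx => by
    obtain ⟨a, b, hab, hset⟩ := Set.ncard_eq_two.1
      (hw.ncard_neighborSet_toSubgraph_eq_two (List.mem_toFinset.1 hx))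
    have ha : w.toSubgraph.Adj x a := by simp [← Subgraph.mem_neighborSet, hset]
    have hb : w.toSubgraph.Adj x b := by simp [← Subgraph.mem_neighborSet, hset]
    have hsx : a = s x ∨ b = s x := by
      by_contra! h
      exact hab (hQ x ⟨ha.adj_sub, h.1⟩ ⟨hb.adj_sub, h.2⟩)
    rw [List.mem_toFinset, ← Walk.mem_verts_toSubgraph]
    rcases hsx with rfl | rfl
    exacts [ha.snd_mem, hb.snd_mem]
  exact card_support_of_isCycle hw ▸ even_card_of_involution hmem (fun x _ => hs x) fun x _ => hne x

variable {V : Type*} {F : SimpleGraph V}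

/-- The graph on the darts of `F` in which opposite darts, and distinct darts with the same tail,
are adjacent. A colour class of a 2-colouring is an orientation of `F` in which every vertex is the
tail of at most one arc and the head of at most one arc. -/
def dartConflict (F : SimpleGraph V) : SimpleGraph F.Dart where
  Adj d e := d ≠ e ∧ (e = d.symm ∨ d.fst = e.fst)
  symm := ⟨fun d e h => ⟨h.1.symm, h.2.imp (fun h => by rw [h, Dart.symm_symm]) Eq.symm⟩⟩
  loopless := ⟨fun _ h => h.1 rfl⟩

theorem dartConflict_colorable_two [Finite V] (hF : ∀ v, (F.neighborSet v).ncard ≤ 2) :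
    (dartConflict F).Colorable 2 := by
  refine colorable_two_of_involutive Dart.symm_involutive Dart.symm_ne ?_
  rintro d a ⟨⟨hda, ha⟩, had⟩ b ⟨⟨hdb, hb⟩, hbd⟩
  replace ha := ha.resolve_left had
  replace hb := hb.resolve_left hbd
  by_contra hab
  have hsub : {d.snd, a.snd, b.snd} ⊆ F.neighborSet d.fst := by
    rintro _ (rfl | rfl | rfl)
    exacts [d.adj, ha ▸ a.adj, hb ▸ b.adj]
  have hne {e e' : F.Dart} (hfst : e.fst = e'.fst) (hee' : e ≠ e') : e.snd ≠ e'.snd :=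
    fun hsnd => hee' (Dart.ext _ _ (Prod.ext hfst hsnd))
  have hthree : ({d.snd, a.snd, b.snd} : Set V).ncard = 3 :=
    Set.ncard_eq_three.2 ⟨_, _, _, hne ha hda, hne hb hdb, hne (ha.symm.trans hb) hab, rfl⟩
  have := (Set.ncard_le_ncard hsub).trans (hF d.fst)
  lia

theorem exists_perm_adj_imp [Finite V] (hF : ∀ v, (F.neighborSet v).ncard ≤ 2) :
    ∃ σ : Equiv.Perm V, ∀ u v, F.Adj u v → v = σ u ∨ u = σ v := by
  have : Finite F.Dart := .of_injective _ Dart.toProd_injective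
  obtain ⟨c⟩ := dartConflict_colorable_two hF
  have hflip (d : F.Dart) : c d.symm ≠ c d := (c.valid ⟨d.symm_ne.symm, .inl rfl⟩).symm
  have hfst (d e : F.Dart) (hde : c d = c e) (h : d.fst = e.fst) : d = e := by
    by_contra hne
    exact c.valid ⟨hne, .inr h⟩ hde
  have hsnd (d e : F.Dart) (hde : c d = c e) (h : d.snd = e.snd) : d = e := by
    have hd := hflip d
    have he := hflip e
    exact Dart.symm_involutive.injective (hfst d.symm e.symm (by lia) h)
  obtain ⟨σ, hσ⟩ := Equiv.Perm.exists_extending_pair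
    (fun d : {d // c d = 0} => d.1.fst) (fun d => d.1.snd)
    (fun d e h => Subtype.ext (hfst _ _ (d.2.trans e.2.symm) h))
    (fun d e h => Subtype.ext (hsnd _ _ (d.2.trans e.2.symm) h))
  refine ⟨σ, fun u v huv => ?_⟩
  let d : F.Dart := ⟨(u, v), huv⟩
  by_cases hd : c d = 0
  · exact .inl (hσ ⟨d, hd⟩).symm
  · have hd' := hflip d
    exact .inr (hσ ⟨d.symm, by lia⟩).symm

end Orientation

section SpacedSets

variable {V : Type*} {F : SimpleGraph V} {σ τ : Equiv.Perm V} {k : ℕ} {D : Set V}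

/-- On each cycle of `σ` consecutive points of `D` are more than `k` and at most `2 * k + 1` steps
apart, except that cycles of length at most `k` may avoid `D`. -/
structure IsSpaced (σ : Equiv.Perm V) (k : ℕ) (D : Set V) : Prop where
  notMem : ∀ v ∈ D, ∀ i, 0 < i → i ≤ k → (σ ^ i) v ∉ D
  exists_mem : ∀ v, (∃ i, 0 < i ∧ i ≤ k ∧ (σ ^ i) v = v) ∨ ∃ i ≤ 2 * k, (σ ^ i) v ∈ D

theorem exists_isSpaced [Finite V] (σ : Equiv.Perm V) (k : ℕ) : ∃ D, IsSpaced σ k D := by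
  let Separated (D : Set V) : Prop := ∀ v ∈ D, ∀ i, 0 < i → i ≤ k → (σ ^ i) v ∉ D
  obtain ⟨D, hD, hmax⟩ := (Set.toFinite {D | Separated D}).exists_maximal ⟨∅, fun _ h => h.elim⟩
  refine ⟨D, hD, fun v => ?_⟩
  by_contra! hv
  obtain ⟨hcycle, hfar⟩ := hv
  -- Otherwise the point `k` steps after `v` could be added to `D`.
  suffices hins : Separated (insert ((σ ^ k) v) D) from
    hfar k (by lia) (hmax hins (Set.subset_insert _ _) (Set.mem_insert _ _))
  rintro x (rfl | hx) i hi hik (hmem | hmem)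
  · rw [← Equiv.Perm.mul_apply, pow_mul_comm, Equiv.Perm.mul_apply, EmbeddingLike.apply_eq_iff_eq]
      at hmem
    exact hcycle i hi hik hmem
  · rw [← Equiv.Perm.mul_apply, ← pow_add] at hmem
    exact hfar (i + k) (by lia) hmem
  · rw [← Nat.add_sub_cancel' hik, pow_add, Equiv.Perm.mul_apply, EmbeddingLike.apply_eq_iff_eq]
      at hmem
    exact hfar (k - i) (by lia) (hmem ▸ hx)
  · exact hD x hx i hi hik hmem

theorem IsSpaced.preimage (hD : IsSpaced σ k D) (hτ : Commute σ τ) : IsSpaced σ k (τ ⁻¹' D) := by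
  have hcomm (i : ℕ) (v : V) : (σ ^ i) (τ v) = τ ((σ ^ i) v) :=
    Equiv.Perm.congr_fun (hτ.pow_left i).eq v
  refine ⟨fun v hv i hi hik => ?_, fun v => ?_⟩
  · rw [Set.mem_preimage, ← hcomm]
    exact hD.notMem _ hv i hi hik
  · simpa only [Set.mem_preimage, hcomm, EmbeddingLike.apply_eq_iff_eq] using hD.exists_mem (τ v)

theorem IsSpaced.eq_zero_of_pow_apply_mem (hD : IsSpaced σ k D) {v : V} (hv : v ∈ D) {i : ℕ}
    (hik : i ≤ k) (h : (σ ^ i) v ∈ D) : i = 0 := by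
  by_contra hi
  exact hD.notMem v hv i (by lia) hik h

theorem IsSpaced.card_mul_card_le [Fintype (Subgroup.zpowers σ)] (hD : IsSpaced σ k D)
    (v : V) [DecidablePred fun τ : Subgroup.zpowers σ => τ.1 v ∈ D] :
    (k + 1) * #{τ : Subgroup.zpowers σ | τ.1 v ∈ D} ≤ Fintype.card (Subgroup.zpowers σ) := by
  let g : Subgroup.zpowers σ := ⟨σ, Subgroup.mem_zpowers σ⟩
  let J : Finset (Subgroup.zpowers σ) := {τ | τ.1 v ∈ D}
  have hJ {τ : Subgroup.zpowers σ} : τ ∈ J ↔ τ.1 v ∈ D := by simp [J]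
  have hinj : Set.InjOn (fun p : ℕ × Subgroup.zpowers σ => g ^ p.1 * p.2)
      (range (k + 1) ×ˢ J : Finset _) := by
    suffices hle : ∀ i j : ℕ, i ≤ j → j ≤ k → ∀ τ ∈ J, ∀ τ' ∈ J, g ^ i * τ = g ^ j * τ' →
        (i, τ) = (j, τ') by
      rintro ⟨i, τ⟩ hp ⟨j, τ'⟩ hq h
      simp only [coe_product, Set.mem_prod, mem_coe, mem_range] at hp hq
      rcases le_total i j with hij | hij
      · exact hle i j hij (by lia) τ hp.2 τ' hq.2 h
      · exact (hle j i hij (by lia) τ' hq.2 τ hp.2 h.symm).symm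
    intro i j hij hjk τ hτ τ' hτ' h
    have hτeq : τ = g ^ (j - i) * τ' := by
      rw [← mul_right_inj (g ^ i), h, ← mul_assoc, ← pow_add, Nat.add_sub_cancel' hij]
    have hmem : (σ ^ (j - i)) (τ'.1 v) ∈ D := by
      have h := hJ.1 hτ
      rw [hτeq] at h
      exact h
    have hsub : j - i = 0 := hD.eq_zero_of_pow_apply_mem (hJ.1 hτ') (by lia) hmem
    rw [hsub, pow_zero, one_mul] at hτeq
    rw [hτeq, show i = j by lia]
  calc (k + 1) * #J = #(range (k + 1) ×ˢ J) := by rw [card_product, card_range]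
    _ ≤ #(univ : Finset (Subgroup.zpowers σ)) := card_le_card_of_injOn _ (by simp) hinj
    _ = Fintype.card (Subgroup.zpowers σ) := card_univ

theorem ncard_supp_le_of_closed [Finite V] (hF : ∀ u v, F.Adj u v → v = σ u ∨ u = σ v) {S : Set V}
    (hfwd : ∀ x ∈ S, σ x ∉ D → σ x ∈ S) (hbwd : ∀ x ∉ D, σ x ∈ S → x ∈ S)
    {s : ↥Dᶜ} (hs : s.1 ∈ S) :
    ((F.induce Dᶜ).connectedComponentMk s).supp.ncard ≤ S.ncard := by
  rw [← Set.ncard_image_of_injective _ Subtype.val_injective]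
  refine Set.ncard_le_ncard ?_
  rintro _ ⟨v, hv, rfl⟩
  obtain ⟨p⟩ := (ConnectedComponent.exact hv).symm
  clear hv
  induction p with
  | nil => exact hs
  | @cons u w _ hadj _ ih =>
    refine ih ?_
    rcases hF u w hadj with h | h
    · exact h ▸ hfwd u hs (h ▸ w.2)
    · exact hbwd w w.2 (h ▸ hs)

/-- The vertices outside `D` from which the first point of `D` met by iterating `σ` is `e`. -/
def arcBefore (σ : Equiv.Perm V) (D : Set V) (e : V) : Set V :=
  {v | ∃ i, 0 < i ∧ (σ ^ i) v = e ∧ ∀ j < i, (σ ^ j) v ∉ D}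

theorem IsSpaced.ncard_arcBefore_le (hD : IsSpaced σ k D) {e : V} (he : e ∈ D) :
    (arcBefore σ D e).ncard ≤ 2 * k := by
  have hsub : arcBefore σ D e ⊆ (fun i => (σ ^ i).symm e) '' (Icc 1 (2 * k) : Finset ℕ) := by
    rintro v ⟨i, hi, rfl, hfirst⟩
    refine ⟨i, ?_, (σ ^ i).symm_apply_apply v⟩
    suffices i ≤ 2 * k by simpa using ⟨hi, this⟩
    rcases hD.exists_mem v with ⟨p, hp, hpk, hcycle⟩ | ⟨j, hj, hmem⟩
    · by_contra hik
      refine hfirst (i - p) (by lia) ?_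
      rwa [← hcycle, ← Equiv.Perm.mul_apply, ← pow_add, Nat.sub_add_cancel (by lia)]
    · by_contra hik
      exact hfirst j (by lia) hmem
  calc (arcBefore σ D e).ncard ≤ _ := Set.ncard_le_ncard hsub ((finite_toSet _).image _)
    _ ≤ ((Icc 1 (2 * k) : Finset ℕ) : Set ℕ).ncard := Set.ncard_image_le (finite_toSet _)
    _ = 2 * k := by rw [Set.ncard_coe_finset, Nat.card_Icc, Nat.add_sub_cancel]

theorem ncard_setOf_sameCycle_le {s : V} {p : ℕ} (hp : 0 < p) (hs : (σ ^ p) s = s) :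
    {x | σ.SameCycle s x}.ncard ≤ p := by
  have hsub : {x | σ.SameCycle s x} ⊆ (fun i => (σ ^ i) s) '' (range p : Finset ℕ) := by
    rintro _ ⟨z, rfl⟩
    have hz : 0 ≤ z % p := Int.emod_nonneg z (by lia)
    have hzp : z % p < p := Int.emod_lt_of_pos z (by lia)
    refine ⟨(z % p).toNat, by simpa using (by lia), ?_⟩
    calc (σ ^ (z % p).toNat) s = (σ ^ (z % p)) s := by
          rw [← zpow_natCast, Int.toNat_of_nonneg hz]
      _ = (σ ^ (z % p + p * (z / p))) s := by
          rw [zpow_add, zpow_mul, zpow_natCast, Equiv.Perm.mul_apply,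
            Equiv.Perm.zpow_apply_eq_self_of_apply_eq_self hs]
      _ = (σ ^ z) s := by rw [Int.emod_add_mul_ediv]
  calc {x | σ.SameCycle s x}.ncard ≤ _ := Set.ncard_le_ncard hsub ((finite_toSet _).image _)
    _ ≤ ((range p : Finset ℕ) : Set ℕ).ncard := Set.ncard_image_le (finite_toSet _)
    _ = p := by rw [Set.ncard_coe_finset, card_range]

theorem apply_mem_arcBefore {e x : V} (he : e ∈ D) (hx : x ∈ arcBefore σ D e) (hσx : σ x ∉ D) :
    σ x ∈ arcBefore σ D e := by
  obtain ⟨i, hi, hix, hfirst⟩ := hx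
  obtain ⟨i, rfl⟩ := Nat.exists_eq_add_one.2 hi
  rw [pow_succ, Equiv.Perm.mul_apply] at hix
  refine ⟨i, Nat.pos_of_ne_zero ?_, hix, fun j hj => ?_⟩
  · rintro rfl
    exact hσx (hix ▸ he)
  · simpa only [pow_succ, Equiv.Perm.mul_apply] using hfirst (j + 1) (by lia)

theorem mem_arcBefore_of_apply_mem {e x : V} (hx : x ∉ D) (hσx : σ x ∈ arcBefore σ D e) :
    x ∈ arcBefore σ D e := by
  obtain ⟨i, -, hix, hfirst⟩ := hσx
  refine ⟨i + 1, i.succ_pos, by rwa [pow_succ, Equiv.Perm.mul_apply], fun j hj => ?_⟩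
  cases j with
  | zero => exact hx
  | succ j => simpa only [pow_succ, Equiv.Perm.mul_apply] using hfirst j (by lia)

theorem IsSpaced.ncard_supp_le [Finite V] (hD : IsSpaced σ k D)
    (hF : ∀ u v, F.Adj u v → v = σ u ∨ u = σ v) (C : (F.induce Dᶜ).ConnectedComponent) :
    C.supp.ncard ≤ 2 * k := by
  classical
  induction C using ConnectedComponent.ind with
  | h s =>
  rcases hD.exists_mem s with ⟨p, hp, hpk, hcycle⟩ | ⟨n, -, hn⟩
  · calc _ ≤ {x | σ.SameCycle s x}.ncard := ncard_supp_le_of_closed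
          (S := {x | σ.SameCycle s x}) hF (fun _ hx _ => Equiv.Perm.sameCycle_apply_right.2 hx)
          (fun _ _ hx => Equiv.Perm.sameCycle_apply_right.1 hx) (Equiv.Perm.SameCycle.refl σ s.1)
      _ ≤ p := ncard_setOf_sameCycle_le hp hcycle
      _ ≤ 2 * k := by lia
  · have hhit : ∃ n, (σ ^ n) s.1 ∈ D := ⟨n, hn⟩
    have he := Nat.find_spec hhit
    have hs : s.1 ∈ arcBefore σ D ((σ ^ Nat.find hhit) s.1) :=
      ⟨Nat.find hhit, (Nat.find_pos hhit).2 s.2, rfl, fun _ => Nat.find_min hhit⟩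
    exact (ncard_supp_le_of_closed hF (fun _ => apply_mem_arcBefore he)
      (fun _ => mem_arcBefore_of_apply_mem) hs).trans (hD.ncard_arcBefore_le he)

end SpacedSets

section EdgeCuts

variable {V : Type*} {G : SimpleGraph V} [DecidableRel G.Adj] {K : Finset V}

theorem even_card_interedges_self (K : Finset V) : Even #(G.interedges K K) :=
  even_card_of_involution (f := Prod.swap) (fun _ => (G.swap_mem_interedges_iff).2)
    (fun a _ => a.swap_swap) fun _ ha h =>
      (G.mem_interedges_iff.1 ha).2.2.ne (congrArg Prod.snd h)

variable [Fintype V]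

theorem card_interedges_univ (K : Finset V) : #(G.interedges K univ) = ∑ x ∈ K, G.degree x := by
  simp only [interedges_def, card_filter, sum_product, ← card_neighborFinset_eq_degree,
    neighborFinset_eq_filter]

variable [DecidableEq V]

theorem odd_card_interedges_compl (hK : Odd #K) (hdeg : ∀ x ∈ K, Odd (G.degree x)) :
    Odd #(G.interedges K Kᶜ) := by
  have hsum : #(G.interedges K K) + #(G.interedges K Kᶜ) = ∑ x ∈ K, G.degree x := by
    rw [← card_interedges_univ, ← union_compl K, ← card_union_of_disjoint
      (G.interedges_disjoint_right K disjoint_compl_right)]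
    congr 1
    ext
    simp only [mem_union, mem_interedges_iff]
    tauto
  have hodd : Odd (∑ x ∈ K, G.degree x) := by
    rwa [odd_sum_iff_odd_card_odd, filter_true_of_mem hdeg]
  exact (Nat.odd_add'.1 (hsum ▸ hodd)).2 (even_card_interedges_self K)

theorem isBridge_of_interedges_compl_eq_singleton {u v : V}
    (h : G.interedges K Kᶜ = {(u, v)}) : G.IsBridge s(u, v) := by
  have hmem (x y : V) : x ∈ K ∧ y ∉ K ∧ G.Adj x y ↔ x = u ∧ y = v := by
    simpa [mk_mem_interedges_iff] using Finset.ext_iff.1 h (x, y)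
  obtain ⟨hu, hv, -⟩ := (hmem u v).2 ⟨rfl, rfl⟩
  rw [isBridge_iff]
  rintro ⟨p⟩
  obtain ⟨d, -, hd₁, hd₂⟩ := p.exists_boundary_dart K hu hv
  have hadj := deleteEdges_adj.1 d.adj
  obtain ⟨h₁, h₂⟩ := (hmem _ _).1 ⟨hd₁, hd₂, hadj.1⟩
  exact hadj.2 (by rw [h₁, h₂]; rfl)

theorem three_le_card_interedges_compl (hG : ∀ e ∈ G.edgeSet, ¬G.IsBridge e) (hK : Odd #K)
    (hdeg : ∀ x ∈ K, Odd (G.degree x)) : 3 ≤ #(G.interedges K Kᶜ) := by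
  obtain ⟨m, hm⟩ := odd_card_interedges_compl hK hdeg
  suffices #(G.interedges K Kᶜ) ≠ 1 by lia
  intro h
  obtain ⟨⟨u, v⟩, huv⟩ := card_eq_one.1 h
  have hadj : G.Adj u v :=
    (G.mk_mem_interedges_iff.1 (huv ▸ mem_singleton_self (u, v) : _ ∈ G.interedges K Kᶜ)).2.2
  exact hG s(u, v) hadj (isBridge_of_interedges_compl_eq_singleton huv)

end EdgeCuts

section OptionalMatching

variable {V : Type*} {G : SimpleGraph V}

theorem two_mul_ncard_lt_of_isTutteViolator [Finite V] {U : Set V} (hU : G.IsTutteViolator U) :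
    2 * U.ncard < Nat.card V := by
  let T := ((⊤ : G.Subgraph).deleteVerts U).coe
  have hT : T.oddComponents.ncard + U.ncard ≤ Nat.card V := calc
    T.oddComponents.ncard + U.ncard ≤ Nat.card T.ConnectedComponent + U.ncard := by
      gcongr
      exact Set.ncard_le_card _
    _ ≤ (Set.univ \ U).ncard + U.ncard := by
      gcongr
      exact Nat.card_le_card_of_surjective T.connectedComponentMk Quot.mk_surjective
    _ = Nat.card V := by
      rw [Set.ncard_sdiff_add_ncard_of_subset U.subset_univ, Set.ncard_univ]
  have : U.ncard < T.oddComponents.ncard := hU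
  lia

theorem ncard_add_two_le_of_isTutteViolator [Finite V] (hV : Even (Nat.card V)) {U : Set V}
    (hU : G.IsTutteViolator U) :
    U.ncard + 2 ≤ ((⊤ : G.Subgraph).deleteVerts U).coe.oddComponents.ncard := by
  have hlt : U.ncard < ((⊤ : G.Subgraph).deleteVerts U).coe.oddComponents.ncard := hU
  have hcard : (Set.univ \ U).ncard + U.ncard = Nat.card V := by
    rw [Set.ncard_sdiff_add_ncard_of_subset U.subset_univ, Set.ncard_univ]
  have hodd : Odd _ ↔ Odd (Set.univ \ U).ncard :=
    odd_ncard_oddComponents (G := ((⊤ : G.Subgraph).deleteVerts U).coe)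
  have hpar : Odd (Set.univ \ U).ncard ↔ Odd U.ncard := Nat.even_add'.1 (hcard ▸ hV)
  grind

/-- An odd set of vertices avoiding `L`, all of whose outgoing edges end in `S`. -/
structure IsOddIsland (G : SimpleGraph V) (L S K : Set V) : Prop where
  odd_ncard : Odd K.ncard
  disjoint : Disjoint K L
  mem_of_adj : ∀ x ∈ K, ∀ y ∉ K, G.Adj x y → y ∈ S

/-- `G` together with a clique on a second copy of the vertices, each of which is joined to all
of `L`. Matching a vertex of `L` into the clique stands for leaving it unmatched, so that perfect
matchings of this graph encode matchings of `G` which cover the complement of `L`. -/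
def joinClique (G : SimpleGraph V) (L : Set V) : SimpleGraph (V ⊕ V) where
  Adj
    | .inl x, .inl y => G.Adj x y
    | .inl x, .inr _ => x ∈ L
    | .inr _, .inl y => y ∈ L
    | .inr x, .inr y => x ≠ y
  symm := ⟨by
    rintro (x | x) (y | y) h
    exacts [Adj.symm (G := G) h, h, h, h.symm]⟩
  loopless := ⟨by
    rintro (x | x) h
    exacts [G.irrefl h, h rfl]⟩

theorem exists_matching_of_isPerfectMatching {L : Set V} {P : (joinClique G L).Subgraph}
    (hP : P.IsPerfectMatching) :
    ∃ M ≤ G, (∀ v, (M.neighborSet v).Subsingleton) ∧ ∀ v ∉ L, (M.neighborSet v).Nonempty := by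
  rw [Subgraph.isPerfectMatching_iff] at hP
  refine ⟨P.spanningCoe.comap Sum.inl, fun _ _ h => P.adj_sub h, fun v x hx y hy => ?_,
    fun v hv => ?_⟩
  · exact Sum.inl_injective ((hP (Sum.inl v)).unique hx hy)
  · obtain ⟨w | w, hw, -⟩ := hP (Sum.inl v)
    · exact ⟨w, hw⟩
    · exact absurd (P.adj_sub hw) hv

section Islands

variable {L : Set V} {U : Set (V ⊕ V)}

/-- `joinClique G L` with the vertices in `U` deleted, in the form in which Tutte's theorem refers
to it. -/
abbrev joinCliqueDelete (G : SimpleGraph V) (L : Set V) (U : Set (V ⊕ V)) :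
    SimpleGraph ((⊤ : (joinClique G L).Subgraph).deleteVerts U).verts :=
  ((⊤ : (joinClique G L).Subgraph).deleteVerts U).coe

/-- The vertices of `G` in a component of `joinCliqueDelete G L U`. -/
def leftPart (c : (joinCliqueDelete G L U).ConnectedComponent) : Set V :=
  {x | ∃ a ∈ c.supp, a.1 = Sum.inl x}

theorem connectedComponentMk_eq_of_adj
    {a b : ((⊤ : (joinClique G L).Subgraph).deleteVerts U).verts} (h : (joinClique G L).Adj a b) :
    (joinCliqueDelete G L U).connectedComponentMk a =
      (joinCliqueDelete G L U).connectedComponentMk b := by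
  refine ConnectedComponent.connectedComponentMk_eq_of_adj ?_
  rw [Subgraph.coe_adj, Subgraph.deleteVerts_adj]
  exact ⟨trivial, a.2.2, trivial, b.2.2, h⟩

theorem isOddIsland_leftPart
    {c : (joinCliqueDelete G L U).ConnectedComponent}
    (hodd : Odd c.supp.ncard) (hc : ∀ a ∈ c.supp, ∃ x ∉ L, a.1 = Sum.inl x) :
    IsOddIsland G L (Sum.inl ⁻¹' U) (leftPart c) := by
  refine ⟨?_, Set.disjoint_left.2 ?_, ?_⟩
  · have himage : Sum.inl '' leftPart c = Subtype.val '' c.supp := by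
      ext a
      constructor
      · rintro ⟨x, ⟨b, hb, hbx⟩, rfl⟩
        exact ⟨b, hb, hbx⟩
      · rintro ⟨b, hb, rfl⟩
        obtain ⟨x, -, hbx⟩ := hc b hb
        exact ⟨x, ⟨b, hb, hbx⟩, hbx.symm⟩
    rwa [← Set.ncard_image_of_injective _ Sum.inl_injective, himage,
      Set.ncard_image_of_injective _ Subtype.val_injective]
  · rintro x ⟨a, ha, hax⟩
    obtain ⟨y, hy, hay⟩ := hc a ha
    rwa [Sum.inl_injective (hax.symm.trans hay)]
  · rintro x ⟨⟨_, _, hxU⟩, hx, rfl⟩ y hy hxy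
    by_contra hyU
    have hmk := connectedComponentMk_eq_of_adj (G := G) (L := L) (U := U)
      (a := ⟨Sum.inl x, trivial, hxU⟩) (b := ⟨Sum.inl y, trivial, hyU⟩) hxy
    exact hy ⟨_, hmk.symm.trans hx, rfl⟩

theorem exists_component_forall_ne {x₀ : V} (hx₀ : Sum.inr x₀ ∉ U) :
    ∃ c₀ : (joinCliqueDelete G L U).ConnectedComponent,
      ∀ c ≠ c₀, ∀ a ∈ c.supp, ∃ x ∉ L, a.1 = Sum.inl x := by
  refine ⟨connectedComponentMk _ ⟨Sum.inr x₀, trivial, hx₀⟩, ?_⟩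
  rintro c hc ⟨a, haU⟩ ha
  rw [ConnectedComponent.mem_supp_iff] at ha
  by_contra! ha'
  refine hc (ha.symm.trans ?_)
  rcases a with x | x
  · exact connectedComponentMk_eq_of_adj (by_contra fun hx => ha' x hx rfl)
  · by_cases hx : x = x₀
    · subst hx; rfl
    · exact connectedComponentMk_eq_of_adj hx

theorem disjoint_leftPart
    {c d : (joinCliqueDelete G L U).ConnectedComponent} (hcd : c ≠ d) :
    Disjoint (leftPart c) (leftPart d) := by
  refine Set.disjoint_left.2 ?_
  rintro x ⟨a, ha, hax⟩ ⟨b, hb, hbx⟩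
  obtain rfl : a = b := Subtype.ext (hax.trans hbx.symm)
  exact hcd (ha.symm.trans hb)

theorem exists_pairwiseDisjoint_isOddIsland [Finite V] {x₀ : V} (hx₀ : Sum.inr x₀ ∉ U) :
    ∃ 𝒦 : Set (Set V), 𝒦.PairwiseDisjoint id ∧
      (∀ K ∈ 𝒦, IsOddIsland G L (Sum.inl ⁻¹' U) K) ∧
      (joinCliqueDelete G L U).oddComponents.ncard ≤ 𝒦.ncard + 1 := by
  obtain ⟨c₀, hc₀⟩ := exists_component_forall_ne (G := G) (L := L) hx₀
  have hisland : ∀ c ∈ (joinCliqueDelete G L U).oddComponents \ {c₀},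
      IsOddIsland G L (Sum.inl ⁻¹' U) (leftPart c) :=
    fun c hc => isOddIsland_leftPart hc.1 (hc₀ c hc.2)
  have hinj : Set.InjOn leftPart ((joinCliqueDelete G L U).oddComponents \ {c₀}) :=
    fun c hc d _ hcd => by
      by_contra hne
      have hempty : leftPart d = ∅ := disjoint_self.1 (by
        simpa only [hcd] using disjoint_leftPart hne)
      have hodd := (hisland c hc).odd_ncard
      rw [hcd, hempty, Set.ncard_empty] at hodd
      exact Nat.not_odd_zero hodd
  refine ⟨leftPart '' ((joinCliqueDelete G L U).oddComponents \ {c₀}), ?_, ?_, ?_⟩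
  · rintro _ ⟨c, -, rfl⟩ _ ⟨d, -, rfl⟩ hne
    exact disjoint_leftPart fun hcd => hne (by rw [hcd])
  · rintro _ ⟨c, hc, rfl⟩
    exact hisland c hc
  · rw [hinj.ncard_image]
    simpa only [Set.ncard_singleton] using
      Set.ncard_le_ncard_sdiff_add_ncard (joinCliqueDelete G L U).oddComponents {c₀}

end Islands

theorem exists_matching_of_forall_ncard_le [Finite V] {L : Set V}
    (h : ∀ (S : Set V) (𝒦 : Set (Set V)), 𝒦.PairwiseDisjoint id →
      (∀ K ∈ 𝒦, IsOddIsland G L S K) → 𝒦.ncard ≤ S.ncard) :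
    ∃ M ≤ G, (∀ v, (M.neighborSet v).Subsingleton) ∧ ∀ v ∉ L, (M.neighborSet v).Nonempty := by
  suffices ∃ P : (joinClique G L).Subgraph, P.IsPerfectMatching by
    obtain ⟨P, hP⟩ := this
    exact exists_matching_of_isPerfectMatching hP
  rw [tutte]
  intro U hU
  have hcard : Nat.card (V ⊕ V) = 2 * Nat.card V := by rw [Nat.card_sum, two_mul]
  obtain ⟨x₀, hx₀⟩ : ∃ x₀ : V, Sum.inr x₀ ∉ U := by
    by_contra! hall
    have hle : Nat.card V ≤ U.ncard := by
      rw [← Set.ncard_range_of_injective (Sum.inr_injective (α := V) (β := V))]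
      exact Set.ncard_le_ncard (Set.range_subset_iff.2 hall)
    have := two_mul_ncard_lt_of_isTutteViolator hU
    lia
  obtain ⟨𝒦, hdisj, hisland, hlt⟩ :=
    exists_pairwiseDisjoint_isOddIsland (G := G) (L := L) hx₀
  have hge : U.ncard + 2 ≤ (joinCliqueDelete G L U).oddComponents.ncard :=
    ncard_add_two_le_of_isTutteViolator (hcard ▸ even_two_mul _) hU
  have hle := calc
    𝒦.ncard ≤ (Sum.inl ⁻¹' U : Set V).ncard := h _ 𝒦 hdisj hisland
    _ = (Sum.inl '' (Sum.inl ⁻¹' U : Set V) : Set (V ⊕ V)).ncard :=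
      (Set.ncard_image_of_injective _ Sum.inl_injective).symm
    _ ≤ U.ncard := Set.ncard_le_ncard (Set.image_preimage_subset _ _)
  generalize (joinCliqueDelete G L U).oddComponents.ncard = q at hlt hge
  lia

end OptionalMatching

section BridgelessMatching

variable {V : Type*} {G : SimpleGraph V}

theorem card_le_card_of_isOddIsland [Fintype V] [DecidableRel G.Adj]
    (hG : ∀ e ∈ G.edgeSet, ¬G.IsBridge e) (hdeg : ∀ v, G.degree v ≤ 3) {S : Finset V}
    {𝒦 : Finset (Set V)} (hdisj : (𝒦 : Set (Set V)).PairwiseDisjoint id)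
    (h𝒦 : ∀ K ∈ 𝒦, IsOddIsland G {v | G.degree v ≤ 2} S K) : #𝒦 ≤ #S := by
  classical
  let cut (K : Set V) : Finset (V × V) := G.interedges K.toFinset K.toFinsetᶜ
  have hcut : ∀ K ∈ 𝒦, 3 ≤ #(cut K) := fun K hK => by
    refine three_le_card_interedges_compl hG ?_ fun x hx => ?_
    · rw [← Set.ncard_eq_toFinset_card']
      exact (h𝒦 K hK).odd_ncard
    · have hx2 : ¬G.degree x ≤ 2 :=
        Set.disjoint_left.1 (h𝒦 K hK).disjoint (Set.mem_toFinset.1 hx)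
      rw [show G.degree x = 3 by have := hdeg x; lia]
      decide
  have hcutdisj : (𝒦 : Set (Set V)).PairwiseDisjoint cut := fun K hK K' hK' hne =>
    disjoint_left.2 fun e he he' => Set.disjoint_left.1 (hdisj hK hK' hne)
      (Set.mem_toFinset.1 (G.mem_interedges_iff.1 he).1)
      (Set.mem_toFinset.1 (G.mem_interedges_iff.1 he').1)
  have hsub : 𝒦.biUnion cut ⊆ G.interedges univ S := fun e he => by
    obtain ⟨K, hK, he⟩ := mem_biUnion.1 he
    obtain ⟨h₁, h₂, hadj⟩ := G.mem_interedges_iff.1 he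
    rw [mem_compl, Set.mem_toFinset] at h₂
    exact G.mem_interedges_iff.2
      ⟨mem_univ _, (h𝒦 K hK).mem_of_adj _ (Set.mem_toFinset.1 h₁) _ h₂ hadj, hadj⟩
  have h3 : 3 * #𝒦 ≤ 3 * #S := calc
    3 * #𝒦 ≤ ∑ K ∈ 𝒦, #(cut K) := by
      rw [mul_comm, ← smul_eq_mul]
      exact card_nsmul_le_sum _ _ _ hcut
    _ = #(𝒦.biUnion cut) := (card_biUnion hcutdisj).symm
    _ ≤ #(G.interedges univ S) := card_le_card hsub
    _ = ∑ x ∈ S, G.degree x := by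
      rw [← card_interedges_univ]
      have := G.symm
      exact Rel.card_interedges_comm univ S
    _ ≤ 3 * #S := by
      rw [mul_comm, ← smul_eq_mul]
      exact sum_le_card_nsmul _ _ _ fun x _ => hdeg x
  lia

theorem exists_matching_of_forall_not_isBridge [Finite V] (hG : ∀ e ∈ G.edgeSet, ¬G.IsBridge e)
    (hdeg : ∀ v, (G.neighborSet v).ncard ≤ 3) :
    ∃ M ≤ G, (∀ v, (M.neighborSet v).Subsingleton) ∧
      ∀ v, ((G \ M).neighborSet v).ncard ≤ 2 := by
  classical
  cases nonempty_fintype V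
  have hncard (v : V) : (G.neighborSet v).ncard = G.degree v := by
    rw [← card_neighborFinset_eq_degree, ← Set.ncard_coe_finset, coe_neighborFinset]
  simp only [hncard] at hdeg
  obtain ⟨M, hMG, hM, hcover⟩ :=
    exists_matching_of_forall_ncard_le (G := G) (L := {v | G.degree v ≤ 2}) fun S 𝒦 hdisj h𝒦 => by
      rw [Set.ncard_eq_toFinset_card', Set.ncard_eq_toFinset_card']
      exact card_le_card_of_isOddIsland hG hdeg (by rwa [Set.coe_toFinset])
        (by simpa only [Set.mem_toFinset, Set.coe_toFinset] using h𝒦)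
  refine ⟨M, hMG, hM, fun v => ?_⟩
  by_cases hv : G.degree v ≤ 2
  · exact (Set.ncard_le_ncard fun x hx => hx.1).trans ((hncard v).trans_le hv)
  · obtain ⟨w, hw⟩ := hcover v hv
    calc ((G \ M).neighborSet v).ncard ≤ (G.neighborSet v \ {w}).ncard := by
          refine Set.ncard_le_ncard fun x hx => ⟨hx.1, ?_⟩
          rintro rfl
          exact hx.2 hw
      _ = G.degree v - 1 := by
          have hwG : w ∈ G.neighborSet v := hMG hw
          rw [Set.ncard_sdiff_singleton_of_mem hwG, hncard]
      _ ≤ 2 := by have := hdeg v; lia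

end BridgelessMatching

section MainTheorem

variable {V : Type*} [Finite V] {G F : SimpleGraph V} {k : ℕ}

theorem fractionallyColorable_induce_compl (hodd : OddGirthAtLeast G (2 * k + 1))
    (hM : ∀ v, ((G \ F).neighborSet v).Subsingleton) {σ : Equiv.Perm V}
    (hσ : ∀ u v, F.Adj u v → v = σ u ∨ u = σ v) {D : Set V} (hD : IsSpaced σ k D) :
    FractionallyColorable (G.induce Dᶜ) (8 / 3) := by
  refine fractionallyColorable_eight_thirds (F := F.induce Dᶜ)
    (fun v x hx y hy => Subtype.ext (hM v hx hy)) ?_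
  have hoddD : OddGirthAtLeast (G.induce Dᶜ) (2 * k + 1) :=
    hodd.comap (Embedding.induce Dᶜ).toHom Subtype.val_injective
  exact intraComponent_colorable_two hoddD fun C => Nat.lt_succ_of_le (hD.ncard_supp_le hσ C)

theorem fractionallyColorable_of_matching (hk : 0 < k) (hodd : OddGirthAtLeast G (2 * k + 1))
    (hM : ∀ v, ((G \ F).neighborSet v).Subsingleton)
    (hF : ∀ v, (F.neighborSet v).ncard ≤ 2) :
    FractionallyColorable G ((k + 1) / k * (8 / 3)) := by
  classical
  obtain ⟨σ, hσ⟩ := exists_perm_adj_imp hF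
  obtain ⟨D, hD⟩ := exists_isSpaced σ k
  have := Fintype.ofFinite (Subgroup.zpowers σ)
  refine FractionallyColorable.average (ι := Subgroup.zpowers σ)
    (s := fun τ => (τ.1 ⁻¹' D)ᶜ) (by positivity) (fun τ => ?_) fun v => ?_
  · obtain ⟨n, hn⟩ := Subgroup.mem_zpowers_iff.1 τ.2
    have hτ : Commute σ τ.1 := hn ▸ Commute.self_zpow σ n
    exact fractionallyColorable_induce_compl hodd hM hσ (hD.preimage hτ)
  · have hsplit := card_filter_add_card_filter_not (s := univ)
      fun τ : Subgroup.zpowers σ => τ.1 v ∈ D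
    rw [card_univ] at hsplit
    have hdel := hD.card_mul_card_le v
    rw [div_mul_eq_mul_div, le_div_iff₀ (by positivity), mul_comm]
    simp only [Set.mem_compl_iff, Set.mem_preimage]
    exact_mod_cast (by nlinarith)

theorem fractionallyColorable_of_oddGirthAtLeast (hk : 0 < k)
    (hdeg : ∀ v, (G.neighborSet v).ncard ≤ 3) (hodd : OddGirthAtLeast G (2 * k + 1)) :
    FractionallyColorable G ((k + 1) / k * (8 / 3)) := by
  induction G using WellFoundedLT.induction with
  | ind G ih =>
  by_cases hbridge : ∃ e ∈ G.edgeSet, G.IsBridge e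
  · obtain ⟨⟨u, v⟩, huv, hbridge⟩ := hbridge
    have hle : G.deleteEdges {s(u, v)} ≤ G := deleteEdges_le _
    have hlt : G.deleteEdges {s(u, v)} < G :=
      hle.lt_of_ne fun h => (deleteEdges_adj.1 (h ▸ huv)).2 rfl
    have hr : (2 : ℝ) ≤ (k + 1) / k * (8 / 3) := by
      have : (1 : ℝ) ≤ (k + 1) / k := (one_le_div (by positivity)).2 (by linarith)
      linarith
    exact FractionallyColorable.of_deleteEdges_of_isBridge hr hbridge <| ih _ hlt
      (fun x => (Set.ncard_le_ncard fun _ h => hle h).trans (hdeg x))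
      (hodd.comap (Hom.ofLE hle) Function.injective_id)
  · obtain ⟨M, hMG, hM, hF⟩ := exists_matching_of_forall_not_isBridge (by simpa using hbridge) hdeg
    refine fractionallyColorable_of_matching hk hodd (F := G \ M) ?_ hF
    rwa [sdiff_sdiff_right_self, inf_eq_right.2 hMG]

end MainTheorem

/-- Every subcubic graph with odd girth at least `g` (where `g ≥ 5` is odd) has
fractional chromatic number at most `8 / (3 - 6/(g+1))`: there is a fractional
coloring of total weight at most this quantity. -/
theorem subcubic_oddgirth_fractional_coloring
    {V : Type*} [Fintype V] [DecidableEq V] (G : SimpleGraph V) [DecidableRel G.Adj]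
    (g : ℕ) (hg : 5 ≤ g) (hodd : Odd g)
    (hsubcubic : ∀ v : V, G.degree v ≤ 3)
    (hoddgirth : ∀ (v : V) (w : G.Walk v v), w.IsCycle → Odd w.length → g ≤ w.length) :
    ∃ w : Finset V → ℝ,
      (∀ I, 0 ≤ w I) ∧
      (∀ I : Finset V, w I ≠ 0 → ∀ a ∈ I, ∀ b ∈ I, ¬ G.Adj a b) ∧
      (∀ v : V, 1 ≤ ∑ I ∈ Finset.univ.filter (fun I : Finset V => v ∈ I), w I) ∧
      ∑ I : Finset V, w I ≤ 8 / (3 - 6 / ((g : ℝ) + 1)) := by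
  obtain ⟨k, rfl⟩ := hodd
  have hk : 0 < k := by lia
  have hdeg (v : V) : (G.neighborSet v).ncard ≤ 3 := by
    rw [← coe_neighborFinset, Set.ncard_coe_finset, card_neighborFinset_eq_degree]
    exact hsubcubic v
  have hcol : FractionallyColorable G ((k + 1) / k * (8 / 3)) :=
    fractionallyColorable_of_oddGirthAtLeast hk hdeg hoddgirth
  obtain ⟨w, hnonneg, hindep, hcover, hsum⟩ := hcol.exists_weights (by positivity)
  have hbound : (k + 1) / k * (8 / 3 : ℝ) = 8 / (3 - 6 / ((2 * k + 1 : ℕ) + 1)) := by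
    have hdenom : (3 : ℝ) - 6 / ((2 * k + 1 : ℕ) + 1) = 3 * k / (k + 1) := by
      push_cast
      field_simp
      ring
    rw [hdenom]
    field_simp
  exact ⟨w, hnonneg, hindep, hcover, (hsum.trans hbound).le⟩
end

section
/- Let G be a bridgeless cubic graph with a 2-factor F, let g ≥ 5 be odd, and suppose every cycle of F has length at least (g+1)/2·1 (i.e., the construction below is well-defined because each gap set spans at most g−1 vertices). Consider the random independent set obtained as follows: on each cycle of F, number the vertices 1..ℓ; choose k uniformly in {1,...,(g+1)/2} and let W be the vertices with index congruent to k modulo (g+1)/2; each path of F∖W has at most g−1 vertices, and if G has odd girth at least g each such induced subgraph is bipartite; in each such subgraph pick one of the two color classes uniformly and independently and color it red; finally, for each edge of the perfect matching M = E(G)∖F with both ends red, uncolor one end uniformly at random. Then every fixed vertex v is red with probability at least (3/8)·(1 − 2/(g+1)). -/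
/-!
For a shift `k` modulo `m`, delete the vertices of `F` whose position on their cycle is congruent
to `-k` modulo `m`. Each remaining gap has fewer than `m` vertices, and closing up a cycle merges at
most its first and last gap, so every block has at most `2 * (m - 1)` vertices and is bipartite in
`G` when the odd girth is larger. Each block picks one colour class by a fair coin. An edge with
both ends red then joins different blocks, hence lies in `G \ F`, and a further fair coin uncolours
one of its ends. A surviving vertex `v` is red with probability `1/2`, and it is uncoloured only if
its partner is also red and the coin of the edge points to `v`, three independent coins in all, so
it stays red with probability at least `1/2 - 1/8 = 3/8`. Finally `v` survives `m - 1` of the `m`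
shifts.
-/

open Finset
open scoped BigOperators

section OddCycles

open SimpleGraph

variable {V : Type*} {G : SimpleGraph V}

lemma even_length_bypass_iff [DecidableEq V]
    (hG : ∀ (v : V) (c : G.Walk v v), c.IsCycle → Even c.length) {u v : V} (p : G.Walk u v) :
    Even p.bypass.length ↔ Even p.length := by
  induction p with
  | nil => simp [Walk.bypass]
  | @cons u v w h p ih =>
    by_cases hu : u ∈ p.bypass.support
    · have hsplit := congrArg Walk.length (p.bypass.take_spec hu)
      have hloop : Even ((p.bypass.takeUntil u hu).length + 1) := by
        have hpath : (p.bypass.takeUntil u hu).IsPath := p.bypass_isPath.takeUntil hu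
        by_cases huv : s(u, v) ∈ (p.bypass.takeUntil u hu).edges
        · rw [Sym2.eq_swap] at huv
          rw [hpath.length_eq_one_of_mem_edges huv]
          exact even_two
        · exact hG u _ ((Walk.cons_isCycle_iff _ h).2 ⟨hpath, huv⟩)
      rw [Walk.length_append] at hsplit
      simp only [Walk.bypass, hu, ↓reduceDIte, Walk.length_cons]
      grind
    · simp only [Walk.bypass, hu, ↓reduceDIte, Walk.length_cons, Nat.even_add_one, ih]

lemma two_colorable_of_forall_isCycle_even
    (hG : ∀ (v : V) (c : G.Walk v v), c.IsCycle → Even c.length) : G.Colorable 2 := by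
  classical
  refine two_colorable_iff_forall_loop_even.2 fun u p => ?_
  have hnil : p.bypass.Nil := Walk.isPath_iff_nil.1 p.bypass_isPath
  rw [← even_length_bypass_iff hG, Walk.length_eq_zero_iff.2 hnil]
  exact Even.zero

lemma length_le_card_of_isCycle [Fintype V] {v : V} {c : G.Walk v v} (hc : c.IsCycle) :
    c.length ≤ Fintype.card V := by
  have htail := hc.isPath_tail.length_lt
  have hlength := c.length_tail_add_one hc.not_nil
  lia

lemma induce_two_colorable_of_ncard_lt {S : Set V} (hS : S.Finite)
    (hG : ∀ (v : V) (c : G.Walk v v), c.IsCycle → Odd c.length → S.ncard < c.length) :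
    (G.induce S).Colorable 2 := by
  have := hS.fintype
  refine two_colorable_of_forall_isCycle_even fun v c hc => ?_
  by_contra hodd
  rw [Nat.not_even_iff_odd] at hodd
  have hlt := hG _ (c.map (Embedding.induce S).toHom)
    (hc.map (Embedding.induce (G := G) S).injective) (by rwa [Walk.length_map])
  have hle := length_le_card_of_isCycle hc
  rw [Walk.length_map] at hlt
  rw [← Nat.card_coe_set_eq, Nat.card_eq_fintype_card] at hlt
  lia

lemma exists_bool_coloring_of_induce_two_colorable {S : Set V} (hS : (G.induce S).Colorable 2) :
    ∃ col : V → Bool, ∀ a ∈ S, ∀ b ∈ S, G.Adj a b → col a ≠ col b := by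
  classical
  let C : (G.induce S).Coloring Bool := hS.toColoring (by simp)
  refine ⟨fun v => if hv : v ∈ S then C ⟨v, hv⟩ else false, fun a ha b hb hab => ?_⟩
  simpa only [ha, hb, ↓reduceDIte] using C.valid (v := ⟨a, ha⟩) (w := ⟨b, hb⟩) hab

end OddCycles

section CyclicNumbering

open SimpleGraph

variable {V : Type*} {F : SimpleGraph V}

/-- A numbering of the vertices of each component of `F` by `0, …, len - 1` in which adjacent
vertices are consecutive modulo `len`. It presents the cycles of a 2-factor without carrying closed
walks along. -/
structure CyclicNumbering (F : SimpleGraph V) where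
  len : F.ConnectedComponent → ℕ
  pos : V → ℕ
  pos_lt : ∀ v, pos v < len (F.connectedComponentMk v)
  eq_of_pos_eq : ∀ v w, F.connectedComponentMk v = F.connectedComponentMk w →
    pos v = pos w → v = w
  pos_of_adj : ∀ v w, F.Adj v w →
    pos w = (pos v + 1) % len (F.connectedComponentMk v) ∨
      pos v = (pos w + 1) % len (F.connectedComponentMk v)

lemma exists_lt_length_getVert_eq {u v : V} {p : F.Walk u u} (hp : ¬ p.Nil) (hv : v ∈ p.support) :
    ∃ i < p.length, p.getVert i = v := by
  obtain ⟨i, hi, hle⟩ := Walk.mem_support_iff_exists_getVert.1 hv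
  rcases hle.lt_or_eq with hlt | rfl
  · exact ⟨i, hlt, hi⟩
  · refine ⟨0, Nat.pos_of_ne_zero fun h => hp (Walk.length_eq_zero_iff.1 h), ?_⟩
    rw [← hi, Walk.getVert_zero, Walk.getVert_length]

lemma index_of_isCycle_of_adj {u : V} {p : F.Walk u u} (hp : p.IsCycle) {i j : ℕ}
    (hi : i < p.length) (hj : j < p.length)
    (hadj : p.toSubgraph.Adj (p.getVert i) (p.getVert j)) :
    j = (i + 1) % p.length ∨ i = (j + 1) % p.length := by
  have hinj : ∀ a < p.length, ∀ b < p.length, p.getVert a = p.getVert b → a = b :=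
    fun a ha b hb h => hp.getVert_injOn' (by rw [Set.mem_ofPred_eq]; lia)
      (by rw [Set.mem_ofPred_eq]; lia) h
  obtain ⟨t, hedge, ht⟩ := (Walk.toSubgraph_adj_iff p).1 hadj
  have hlt : (t + 1) % p.length < p.length := Nat.mod_lt _ (by lia)
  have hwrap : p.getVert ((t + 1) % p.length) = p.getVert (t + 1) := by
    rcases (show t + 1 ≤ p.length from ht).lt_or_eq with h | h
    · rw [Nat.mod_eq_of_lt h]
    · rw [h, Nat.mod_self, Walk.getVert_zero, Walk.getVert_length]
  rw [← hwrap, Sym2.eq_iff] at hedge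
  rcases hedge with ⟨h₁, h₂⟩ | ⟨h₁, h₂⟩
  · left
    rw [← hinj _ ht _ hi h₁, hinj _ hlt _ hj h₂]
  · right
    rw [← hinj _ ht _ hj h₁, hinj _ hlt _ hi h₂]

lemma nonempty_cyclicNumbering [Finite V] (hF : ∀ v, (F.neighborSet v).ncard = 2) :
    Nonempty (CyclicNumbering F) := by
  classical
  have := Fintype.ofFinite V
  have hcycles : F.IsCycles := fun v _ => hF v
  have hcycle (C : F.ConnectedComponent) :
      ∃ (u : V) (p : F.Walk u u), p.IsCycle ∧ p.toSubgraph.verts = C.supp := by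
    obtain ⟨u, hu⟩ := C.nonempty_supp
    exact ⟨u, hcycles.exists_cycle_toSubgraph_verts_eq_connectedComponentSupp hu
      (Set.nonempty_of_ncard_ne_zero (by rw [hF u]; exact two_ne_zero))⟩
  choose base p hp hverts using hcycle
  have hmem (v : V) : v ∈ (p (F.connectedComponentMk v)).toSubgraph.verts := by
    rw [hverts]
    exact ConnectedComponent.connectedComponentMk_mem
  have hpos (v : V) : ∃ i < (p (F.connectedComponentMk v)).length,
      (p (F.connectedComponentMk v)).getVert i = v :=
    exists_lt_length_getVert_eq (hp _).not_nil ((p _).mem_verts_toSubgraph.1 (hmem v))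
  choose pos hlt hget using hpos
  refine ⟨⟨fun C => (p C).length, pos, hlt, fun v w hC h => ?_, fun v w hvw => ?_⟩⟩
  · rw [← hget v, ← hget w, h, hC]
  · have hC : F.connectedComponentMk w = F.connectedComponentMk v :=
      ConnectedComponent.connectedComponentMk_eq_of_adj hvw.symm
    refine index_of_isCycle_of_adj (hp _) (hlt v) (hC ▸ hlt w) ?_
    have hadj := ((hp _).adj_toSubgraph_iff_of_isCycles hcycles (hmem v) w).2 hvw
    rwa [hget v, ← hC, hget w, hC]

namespace CyclicNumbering

variable (N : CyclicNumbering F) (m a : ℕ)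

/-- The number of the gap containing `v` when the positions `i` with `m ∣ i + a` are removed. -/
def gapIndex (v : V) : ℕ := (N.pos v + a) / m

/-- The index of the last gap of the component `C`. -/
def lastGap (C : F.ConnectedComponent) : ℕ := (N.len C - 1 + a) / m

/-- The `q`-th gap of the component `C`: the remaining vertices between two consecutive removed
positions. -/
def gap (C : F.ConnectedComponent) (q : ℕ) : Set V :=
  {v | F.connectedComponentMk v = C ∧ ¬ m ∣ N.pos v + a ∧ N.gapIndex m a v = q}

/-- The partition of the vertices into gaps, the first and the last gap of each component being
merged; reducing the gap index modulo `lastGap` is what merges them. If `lastGap` is `0`, there is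
only one gap and reducing modulo `0` changes nothing. -/
def blocks : Setoid V :=
  Setoid.ker fun v => (F.connectedComponentMk v,
    N.gapIndex m a v % N.lastGap m a (F.connectedComponentMk v))

variable {N m a}

lemma blocks_iff {v w : V} : N.blocks m a v w ↔
    F.connectedComponentMk v = F.connectedComponentMk w ∧
      N.gapIndex m a v % N.lastGap m a (F.connectedComponentMk v) =
        N.gapIndex m a w % N.lastGap m a (F.connectedComponentMk w) := by
  rw [blocks, Setoid.ker_def, Prod.mk.injEq]

lemma gapIndex_le_lastGap (v : V) :
    N.gapIndex m a v ≤ N.lastGap m a (F.connectedComponentMk v) :=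
  Nat.div_le_div_right (by have := N.pos_lt v; lia)

lemma ncard_gap_le (hm : 0 < m) (C : F.ConnectedComponent) (q : ℕ) :
    (N.gap m a C q).ncard ≤ m - 1 := by
  have hmaps : ∀ v ∈ N.gap m a C q,
      N.pos v + a ∈ (Finset.Ioo (m * q) (m * q + m) : Set ℕ) := by
    rintro v ⟨-, hv, rfl⟩
    have hdiv := Nat.div_add_mod (N.pos v + a) m
    have hlt := Nat.mod_lt (N.pos v + a) hm
    have hpos := Nat.pos_of_ne_zero fun h => hv (Nat.dvd_of_mod_eq_zero h)
    rw [Finset.coe_Ioo, Set.mem_Ioo, gapIndex]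
    lia
  have hinj : Set.InjOn (fun v => N.pos v + a) (N.gap m a C q) :=
    fun v hv w hw h => N.eq_of_pos_eq v w (hv.1.trans hw.1.symm) (Nat.add_right_cancel h)
  calc (N.gap m a C q).ncard
      ≤ (Finset.Ioo (m * q) (m * q + m) : Set ℕ).ncard :=
        Set.ncard_le_ncard_of_injOn _ hmaps hinj (Finset.finite_toSet _)
    _ = m - 1 := by rw [Set.ncard_coe_finset, Nat.card_Ioo, Nat.add_sub_cancel_left]

lemma block_subset_union_gap (v : V) :
    {w | ¬ m ∣ N.pos w + a ∧ N.blocks m a v w} ⊆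
      N.gap m a (F.connectedComponentMk v)
          (N.gapIndex m a v % N.lastGap m a (F.connectedComponentMk v)) ∪
        N.gap m a (F.connectedComponentMk v) (N.lastGap m a (F.connectedComponentMk v)) := by
  rintro w ⟨hw, hvw⟩
  obtain ⟨hC, hindex⟩ := blocks_iff.1 hvw
  rcases (gapIndex_le_lastGap w).lt_or_eq with hlt | heq
  · exact Or.inl ⟨hC.symm, hw, by rw [hindex, Nat.mod_eq_of_lt hlt]⟩
  · exact Or.inr ⟨hC.symm, hw, hC ▸ heq⟩

lemma ncard_block_le [Finite V] (hm : 0 < m) (v : V) :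
    {w | ¬ m ∣ N.pos w + a ∧ N.blocks m a v w}.ncard ≤ 2 * (m - 1) := by
  refine (Set.ncard_le_ncard (block_subset_union_gap v) (Set.toFinite _)).trans
    ((Set.ncard_union_le _ _).trans ?_)
  rw [two_mul]
  exact Nat.add_le_add (ncard_gap_le hm _ _) (ncard_gap_le hm _ _)

lemma blocks_of_pos_eq_succ_mod (ha : a < m) {v w : V}
    (hC : F.connectedComponentMk v = F.connectedComponentMk w)
    (hpos : N.pos w = (N.pos v + 1) % N.len (F.connectedComponentMk v))
    (hw : ¬ m ∣ N.pos w + a) : N.blocks m a v w := by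
  refine blocks_iff.2 ⟨hC, ?_⟩
  rw [← hC]
  rcases (show N.pos v + 1 ≤ _ from N.pos_lt v).lt_or_eq with hlt | heq
  · rw [Nat.mod_eq_of_lt hlt] at hpos
    rw [hpos, Nat.add_right_comm] at hw
    rw [gapIndex, gapIndex, hpos, Nat.add_right_comm, Nat.succ_div_of_not_dvd hw]
  · rw [heq, Nat.mod_self] at hpos
    have hlast : N.gapIndex m a v = N.lastGap m a (F.connectedComponentMk v) := by
      rw [gapIndex, lastGap, ← heq, Nat.add_sub_cancel]
    have hfirst : N.gapIndex m a w = 0 := by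
      rw [gapIndex, hpos, Nat.zero_add, Nat.div_eq_of_lt ha]
    rw [hlast, hfirst, Nat.mod_self, Nat.zero_mod]

lemma blocks_of_adj (ha : a < m) {v w : V} (hvw : F.Adj v w)
    (hv : ¬ m ∣ N.pos v + a) (hw : ¬ m ∣ N.pos w + a) : N.blocks m a v w := by
  have hC := ConnectedComponent.connectedComponentMk_eq_of_adj hvw
  rcases N.pos_of_adj v w hvw with h | h
  · exact blocks_of_pos_eq_succ_mod ha hC h hw
  · exact (N.blocks m a).symm (blocks_of_pos_eq_succ_mod ha hC.symm (hC ▸ h) hv)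

end CyclicNumbering

end CyclicNumbering

section Distributions

open SimpleGraph

variable {V : Type*} [Fintype V] {G : SimpleGraph V}

/-- `μ` is a probability distribution on the independent sets of `G`, given by its weights on all
vertex sets. -/
structure IsIndepSetDistribution (G : SimpleGraph V) (μ : Finset V → ℝ) : Prop where
  nonneg : ∀ I, 0 ≤ μ I
  isIndepSet : ∀ I : Finset V, μ I ≠ 0 → G.IsIndepSet (I : Set V)
  sum_eq_one : ∑ I, μ I = 1

/-- The probability that a random vertex set with weights `μ` contains `v`. -/
def coverage [DecidableEq V] (μ : Finset V → ℝ) (v : V) : ℝ := ∑ I with v ∈ I, μ I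

lemma coverage_single [DecidableEq V] (I : Finset V) (v : V) :
    coverage (Pi.single I 1) v = if v ∈ I then 1 else 0 := by
  simp only [coverage, Pi.single_apply, Finset.sum_ite_eq', mem_filter, mem_univ, true_and]

lemma coverage_expect [DecidableEq V] {κ : Type*} [Fintype κ] (μ : κ → Finset V → ℝ) (v : V) :
    coverage (𝔼 k, μ k) v = 𝔼 k, coverage (μ k) v := by
  simp only [coverage, expect_apply, expect_sum_comm]

namespace IsIndepSetDistribution

lemma single [DecidableEq V] {I : Finset V} (hI : G.IsIndepSet (I : Set V)) :
    IsIndepSetDistribution G (Pi.single I 1) where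
  nonneg := (Pi.single_nonneg.2 zero_le_one : (0 : Finset V → ℝ) ≤ Pi.single I 1)
  isIndepSet J hJ := by
    obtain rfl : J = I := by
      by_contra hne
      exact hJ (Pi.single_eq_of_ne hne 1)
    exact hI
  sum_eq_one := by simp only [Pi.single_apply, Finset.sum_ite_eq', mem_univ, ↓reduceIte]

lemma expect {κ : Type*} [Fintype κ] [Nonempty κ] {μ : κ → Finset V → ℝ}
    (hμ : ∀ k, IsIndepSetDistribution G (μ k)) : IsIndepSetDistribution G (𝔼 k, μ k) where
  nonneg I := by
    rw [expect_apply]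
    exact expect_nonneg fun k _ => (hμ k).nonneg I
  isIndepSet I hI := by
    rw [expect_apply] at hI
    obtain ⟨k, -, hk⟩ := exists_ne_zero_of_expect_ne_zero hI
    exact (hμ k).isIndepSet I hk
  sum_eq_one := by
    simp only [expect_apply, ← expect_sum_comm, (hμ _).sum_eq_one, Fintype.expect_const]

lemma coverage_nonneg [DecidableEq V] {μ : Finset V → ℝ} (hμ : IsIndepSetDistribution G μ)
    (v : V) : 0 ≤ coverage μ v :=
  Finset.sum_nonneg fun I _ => hμ.nonneg I

end IsIndepSetDistribution

lemma exists_isIndepSetDistribution_of_colored_family [DecidableEq V] {κ : Type*} [Fintype κ]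
    [Nonempty κ] (c : V → κ) (p : ℝ)
    (h : ∀ k, ∃ μ, IsIndepSetDistribution G μ ∧ ∀ v, c v ≠ k → p ≤ coverage μ v) :
    ∃ μ, IsIndepSetDistribution G μ ∧ ∀ v, p * (1 - 1 / Fintype.card κ) ≤ coverage μ v := by
  classical
  choose μ hμ hp using h
  refine ⟨𝔼 k, μ k, .expect hμ, fun v => ?_⟩
  have hbound (k : κ) : p - (if c v = k then p else 0) ≤ coverage (μ k) v := by
    split_ifs with hk
    · rw [sub_self]
      exact (hμ k).coverage_nonneg v
    · rw [sub_zero]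
      exact hp k v hk
  calc p * (1 - 1 / Fintype.card κ)
      = 𝔼 k, (p - if c v = k then p else 0) := by
        rw [expect_sub_distrib, Fintype.expect_const, Fintype.expect_eq_sum_div_card,
          Finset.sum_ite_eq, if_pos (mem_univ _), mul_sub, mul_one, mul_one_div]
    _ ≤ 𝔼 k, coverage (μ k) v := expect_le_expect fun k _ => hbound k
    _ = coverage (𝔼 k, μ k) v := (coverage_expect μ v).symm

end Distributions

section Coins

variable {ι : Type*} [Fintype ι] [DecidableEq ι]

lemma expect_coins_eq_on (T : Finset ι) (y : ι → Bool) :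
    𝔼 s : ι → Bool, (if ∀ i ∈ T, s i = y i then (1 : ℝ) else 0) = (1 / 2) ^ #T := by
  have hcylinder : ({s | ∀ i ∈ T, s i = y i} : Finset (ι → Bool)) =
      Fintype.piFinset fun i => if i ∈ T then {y i} else univ := by
    ext s
    simp only [mem_filter, mem_univ, true_and, Fintype.mem_piFinset]
    refine forall_congr' fun i => ?_
    by_cases hi : i ∈ T <;> simp [hi]
  have hfactor (i : ι) : (#(if i ∈ T then {y i} else (univ : Finset Bool)) : ℝ) =
      2 * if i ∈ T then 1 / 2 else 1 := by
    split_ifs <;> simp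
  rw [Fintype.expect_eq_sum_div_card, Finset.sum_boole, hcylinder, Fintype.card_piFinset,
    Nat.cast_prod, Finset.prod_congr rfl fun i _ => hfactor i, Finset.prod_mul_distrib,
    Finset.prod_const, Finset.prod_ite_mem, univ_inter, Finset.prod_const, Fintype.card_fun,
    Fintype.card_bool, card_univ, Nat.cast_pow, Nat.cast_ofNat,
    mul_div_cancel_left₀ _ (pow_ne_zero _ two_ne_zero)]

end Coins

section RedSet

open SimpleGraph

variable {V : Type*}

/-- The outcomes of the coins: one coin for each block of the partition `r`, choosing the colour
class to be painted red, and one for each unordered pair, deciding which of its ends is uncoloured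
in case of a conflict. -/
abbrev Coins (r : Setoid V) : Type _ := Quotient r ⊕ Sym2 V → Bool

variable (G : SimpleGraph V) (S : Set V) (r : Setoid V) (col : V → Bool)

/-- The vertices of `S` that are red before conflicts are resolved: those in the chosen class of
the colouring `col` of their block. -/
def initialRed (s : Coins r) : Set V := {v ∈ S | s (.inl ⟦v⟧) = col v}

/-- The coin of the pair `{v, w}` points to `v`. The outcome `true` stands for the first component
of the arbitrary ordering `Quot.out` of the pair. -/
def PointsTo {r : Setoid V} (s : Coins r) (v w : V) : Prop :=
  s (.inr s(v, w)) = true ↔ s(v, w).out.1 = v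

open Classical in
/-- The red set: the initially red vertices to which the coin of no conflict edge points. -/
noncomputable def redSet [Fintype V] (s : Coins r) : Finset V :=
  {v | v ∈ initialRed S r col s ∧ ∀ w ∈ initialRed S r col s, G.Adj v w → ¬ PointsTo s v w}

variable {G S r col}

lemma pointsTo_or_pointsTo_swap (s : Coins r) {v w : V} (hvw : v ≠ w) :
    PointsTo s v w ∨ PointsTo s w v := by
  have hout := Sym2.mem_iff.1 (Sym2.out_fst_mem s(v, w))
  rw [PointsTo, PointsTo, Sym2.eq_swap (a := w)]
  grind

lemma isIndepSet_redSet [Fintype V] (s : Coins r) :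
    G.IsIndepSet (redSet G S r col s : Set V) := by
  intro v hv w hw hne hvw
  simp only [redSet, coe_filter, mem_univ, true_and, Set.mem_ofPred_eq] at hv hw
  rcases pointsTo_or_pointsTo_swap s hne with h | h
  · exact hv.2 w hw.1 hvw h
  · exact hw.2 v hv.1 hvw.symm h

lemma not_rel_of_adj_of_mem_initialRed
    (hcol : ∀ v ∈ S, ∀ w ∈ S, r v w → G.Adj v w → col v ≠ col w) {s : Coins r} {v w : V}
    (hv : v ∈ initialRed S r col s) (hw : w ∈ initialRed S r col s) (hvw : G.Adj v w) :
    ¬ r v w := by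
  intro hr
  refine hcol v hv.1 w hw.1 hr hvw ?_
  rw [← hv.2, ← hw.2, Quotient.sound hr]

variable [Fintype V]

open Classical in
lemma expect_mem_initialRed {v : V} (hv : v ∈ S) :
    𝔼 s : Coins r, (if v ∈ initialRed S r col s then (1 : ℝ) else 0) = 1 / 2 := by
  simpa only [mem_singleton, forall_eq, card_singleton, pow_one, initialRed, Set.mem_sep_iff, hv,
    true_and] using expect_coins_eq_on {Sum.inl ⟦v⟧} fun _ : Quotient r ⊕ Sym2 V => col v

open Classical in
lemma expect_uncolored_le
    (hcol : ∀ v ∈ S, ∀ w ∈ S, r v w → G.Adj v w → col v ≠ col w) {v : V}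
    (hcross : {w ∈ S | G.Adj v w ∧ ¬ r v w}.Subsingleton) :
    𝔼 s : Coins r, (if v ∈ initialRed S r col s ∧
      ∃ w ∈ initialRed S r col s, G.Adj v w ∧ PointsTo s v w then (1 : ℝ) else 0) ≤ 1 / 8 := by
  by_cases hpartner : ∃ w ∈ S, G.Adj v w ∧ ¬ r v w
  · obtain ⟨u, hu, hvu, hru⟩ := hpartner
    let T : Finset (Quotient r ⊕ Sym2 V) := {.inl ⟦v⟧, .inl ⟦u⟧, .inr s(v, u)}
    let y : Quotient r ⊕ Sym2 V → Bool :=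
      Sum.elim (fun q => if q = ⟦v⟧ then col v else col u) fun e => decide (e.out.1 = v)
    have hblocks : (⟦u⟧ : Quotient r) ≠ ⟦v⟧ := fun h => hru (r.symm (Quotient.exact h))
    have hT : #T = 3 := by simp [T, hblocks.symm]
    have hevent (s : Coins r) (hs : v ∈ initialRed S r col s ∧
        ∃ w ∈ initialRed S r col s, G.Adj v w ∧ PointsTo s v w) : ∀ i ∈ T, s i = y i := by
      obtain ⟨hv, w, hw, hvw, hcoin⟩ := hs
      obtain rfl : w = u := hcross ⟨hw.1, hvw, not_rel_of_adj_of_mem_initialRed hcol hv hw hvw⟩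
        ⟨hu, hvu, hru⟩
      simp only [T, y, mem_insert, mem_singleton, forall_eq_or_imp, forall_eq, Sum.elim_inl,
        Sum.elim_inr, ↓reduceIte, hblocks]
      exact ⟨hv.2, hw.2, Bool.eq_iff_iff.2 (hcoin.trans decide_eq_true_iff.symm)⟩
    calc _ ≤ 𝔼 s : Coins r, (if ∀ i ∈ T, s i = y i then (1 : ℝ) else 0) :=
          expect_le_expect fun s _ => by
            split_ifs with h h' h'
            exacts [le_rfl, (h' (hevent s h)).elim, zero_le_one, le_rfl]
      _ = 1 / 8 := by rw [expect_coins_eq_on, hT]; norm_num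
  · refine (expect_eq_zero fun s _ => if_neg ?_).trans_le (by norm_num)
    rintro ⟨hv, w, hw, hvw, -⟩
    exact hpartner ⟨w, hw.1, hvw, not_rel_of_adj_of_mem_initialRed hcol hv hw hvw⟩

open Classical in
lemma three_eighths_le_expect_mem_redSet
    (hcol : ∀ v ∈ S, ∀ w ∈ S, r v w → G.Adj v w → col v ≠ col w) {v : V} (hv : v ∈ S)
    (hcross : {w ∈ S | G.Adj v w ∧ ¬ r v w}.Subsingleton) :
    3 / 8 ≤ 𝔼 s : Coins r, (if v ∈ redSet G S r col s then (1 : ℝ) else 0) := by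
  have hsplit (s : Coins r) : (if v ∈ redSet G S r col s then (1 : ℝ) else 0) =
      (if v ∈ initialRed S r col s then 1 else 0) - if v ∈ initialRed S r col s ∧
        ∃ w ∈ initialRed S r col s, G.Adj v w ∧ PointsTo s v w then 1 else 0 := by
    have hred : v ∈ redSet G S r col s ↔ v ∈ initialRed S r col s ∧
        ¬ ∃ w ∈ initialRed S r col s, G.Adj v w ∧ PointsTo s v w := by
      simp only [redSet, mem_filter, mem_univ, true_and, not_exists, not_and]
    by_cases hinit : v ∈ initialRed S r col s <;>
      by_cases hconflict : ∃ w ∈ initialRed S r col s, G.Adj v w ∧ PointsTo s v w <;>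
        simp [hred, hinit, hconflict]
  rw [expect_congr rfl fun s _ => hsplit s, expect_sub_distrib, expect_mem_initialRed hv]
  linarith [expect_uncolored_le hcol hcross]

lemma exists_isIndepSetDistribution_of_bipartite_blocks [DecidableEq V]
    (hbip : ∀ v, (G.induce {w ∈ S | r v w}).Colorable 2)
    (hcross : ∀ v ∈ S, {w ∈ S | G.Adj v w ∧ ¬ r v w}.Subsingleton) :
    ∃ μ, IsIndepSetDistribution G μ ∧ ∀ v ∈ S, 3 / 8 ≤ coverage μ v := by
  classical
  choose blockCol hblockCol using
    fun q : Quotient r => exists_bool_coloring_of_induce_two_colorable (hbip q.out)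
  let col : V → Bool := fun v => blockCol ⟦v⟧ v
  have hcol : ∀ v ∈ S, ∀ w ∈ S, r v w → G.Adj v w → col v ≠ col w := by
    intro v hv w hw hvw hadj
    have hout : r (⟦v⟧ : Quotient r).out v := Quotient.mk_out v
    have hne := hblockCol ⟦v⟧ v ⟨hv, hout⟩ w ⟨hw, r.trans hout hvw⟩ hadj
    rwa [show col w = blockCol ⟦v⟧ w by rw [Quotient.sound hvw]]
  refine ⟨𝔼 s : Coins r, Pi.single (redSet G S r col s) 1,
    .expect fun s => .single (isIndepSet_redSet s), fun v hv => ?_⟩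
  simp only [coverage_expect, coverage_single]
  convert three_eighths_le_expect_mem_redSet hcol hv (hcross v hv)

end RedSet

section TwoFactor

open SimpleGraph

variable {V : Type*} {G F : SimpleGraph V}

lemma subsingleton_neighborSet_sdiff_of_degree_le (hFG : F ≤ G) {v : V}
    [Fintype (G.neighborSet v)] (hdeg : G.degree v ≤ (F.neighborSet v).ncard + 1) :
    ((G \ F).neighborSet v).Subsingleton := by
  have hsub : F.neighborSet v ⊆ G.neighborSet v := fun w hw => hFG hw
  have hcard : (G.neighborSet v).ncard = G.degree v := by
    rw [← card_neighborSet_eq_degree, ← Nat.card_coe_set_eq, Nat.card_eq_fintype_card]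
  have hfin : (G.neighborSet v).Finite := Set.toFinite _
  have : Finite ((G \ F).neighborSet v) := hfin.subset fun w hw => hw.1
  rw [← Set.ncard_le_one_iff_subsingleton, neighborSet_sdiff,
    Set.ncard_sdiff hsub (hfin.subset hsub), hcard]
  lia

theorem random_red_set_of_two_factor_general [Fintype V] [DecidableEq V] (g : ℕ)
    (hF : ∀ v, (F.neighborSet v).ncard = 2)
    (hcross : ∀ v, ((G \ F).neighborSet v).Subsingleton)
    (hoddgirth : ∀ (v : V) (w : G.Walk v v), w.IsCycle → Odd w.length → g ≤ w.length) :
    ∃ μ, IsIndepSetDistribution G μ ∧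
      ∀ v, (3 / 8 : ℝ) * (1 - 2 / ((g : ℝ) + 1)) ≤ coverage μ v := by
  obtain ⟨N⟩ := nonempty_cyclicNumbering hF
  let m := g / 2 + 1
  have hm : 0 < m := Nat.succ_pos _
  have hshift (v : V) (k : ZMod m) : -(N.pos v : ZMod m) ≠ k ↔ ¬ m ∣ N.pos v + k.val := by
    rw [← ZMod.natCast_eq_zero_iff, Nat.cast_add, ZMod.natCast_zmod_val, ne_eq,
      neg_eq_iff_add_eq_zero]
  obtain ⟨μ, hμ, hcov⟩ := exists_isIndepSetDistribution_of_colored_family (G := G)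
      (fun v => -(N.pos v : ZMod m)) (3 / 8) fun k => by
    simp only [hshift]
    refine exists_isIndepSetDistribution_of_bipartite_blocks
      (S := {v | ¬ m ∣ N.pos v + k.val}) (r := N.blocks m k.val) (fun v => ?_) fun v hv => ?_
    · refine induce_two_colorable_of_ncard_lt (Set.toFinite _) fun u c hc hodd => ?_
      have hblock := N.ncard_block_le (a := k.val) hm v
      have hgirth := hoddgirth u c hc hodd
      refine hblock.trans_lt ?_
      obtain ⟨t, ht⟩ := hodd
      lia
    · exact (hcross v).anti fun w ⟨hw, hvw, hr⟩ =>
        ⟨hvw, fun h => hr (N.blocks_of_adj k.val_lt h hv hw)⟩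
  refine ⟨μ, hμ, fun v => le_trans ?_ (hcov v)⟩
  have hmg : (g : ℝ) + 1 ≤ m * 2 := by
    norm_cast
    lia
  have hmpos : (0 : ℝ) < m := Nat.cast_pos.2 hm
  have hdiv : 1 / (m : ℝ) ≤ 2 / ((g : ℝ) + 1) := by
    rw [div_le_div_iff₀ hmpos (by positivity)]
    linarith
  rw [ZMod.card]
  linarith

end TwoFactor

/-- For a bridgeless cubic graph `G` with a 2-factor `F` all of whose cycles are long
enough, with odd girth at least `g` (`g ≥ 5` odd), the randomized procedure of the paper
produces a random independent (red) set containing every fixed vertex with probability at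
least `(3/8)·(1 - 2/(g+1))`: there is a probability distribution on the independent sets
of `G` covering each vertex with at least this probability. -/
theorem random_red_set_of_two_factor
    {V : Type*} [Fintype V] [DecidableEq V] (G F : SimpleGraph V) [DecidableRel G.Adj]
    (g : ℕ) (hg : 5 ≤ g) (hodd : Odd g)
    (hcubic : ∀ v : V, G.degree v = 3)
    (hbridgeless : ∀ e ∈ G.edgeSet, ¬ G.IsBridge e)
    (hFsub : F ≤ G)
    (hF2 : ∀ v : V, (F.neighborSet v).ncard = 2)
    (hFcycles : ∀ (v : V) (w : F.Walk v v), w.IsCycle → (g + 1) / 2 ≤ w.length)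
    (hoddgirth : ∀ (v : V) (w : G.Walk v v), w.IsCycle → Odd w.length → g ≤ w.length) :
    ∃ μ : Finset V → ℝ,
      (∀ I, 0 ≤ μ I) ∧
      (∀ I : Finset V, μ I ≠ 0 → ∀ a ∈ I, ∀ b ∈ I, ¬ G.Adj a b) ∧
      (∑ I : Finset V, μ I = 1) ∧
      (∀ v : V,
        (3 / 8 : ℝ) * (1 - 2 / ((g : ℝ) + 1)) ≤
          ∑ I ∈ Finset.univ.filter (fun I : Finset V => v ∈ I), μ I) := by
  obtain ⟨μ, hμ, hcov⟩ := random_red_set_of_two_factor_general g hF2 (fun v =>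
    subsingleton_neighborSet_sdiff_of_degree_le hFsub (by rw [hcubic v, hF2 v])) hoddgirth
  exact ⟨μ, hμ.nonneg, fun I hI a ha b hb hab => hμ.isIndepSet I hI ha hb hab.ne hab,
    hμ.sum_eq_one, hcov⟩
end
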